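/- Generalized Schützenberger involution: in the Coxeter setting below, assume W is finite with longest element w_0, and define the transformation I = P_{w_0} ∘ (−w_0) ∘ κ on continuous paths π : [0,T] → V with π(0) = 0, i.e. Iπ = P_{w_0}(η) where η(t) = −w_0( π(T−t) − π(T) ). Then: (i) I ∘ I = P_{w_0}; (ii) for every dominant path π, I(Iπ) = π (so the restriction of I to dominant paths is an involution); (iii) I ∘ P_{w_0} = I; (iv) for every path π, (Iπ)(T) = (P_{w_0}π)(T); in particular (Iπ)(T) = π(T) when π is dominant. -/

import Mathlib

/-- The Pitman transform associated with a pair `(α, α∨)`: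
`P_α π (t) = π t − (inf_{0 ≤ s ≤ t} α∨(π s)) • α`. -/
noncomputable def pitman {V : Type*} [AddCommGroup V] [Module ℝ V]
    (α : V) (αv : Module.Dual ℝ V) (π : ℝ → V) : ℝ → V :=
  fun t => π t - sInf ((fun s => αv (π s)) '' Set.Icc 0 t) • α

/-- The composite Pitman transform `P_{α_{s₁}} ∘ ⋯ ∘ P_{α_{s_l}}` along a word
`l = [s₁, …, s_l]` in the generators. -/
noncomputable def pitmanWord {V : Type*} [AddCommGroup V] [Module ℝ V] {B : Type*}
    (α : B → V) (αv : B → Module.Dual ℝ V) (l : List B) : (ℝ → V) → (ℝ → V) :=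
  l.foldr (fun s f => pitman (α s) (αv s) ∘ f) id

/-- The generalized Schützenberger involution `I = P_{w₀} ∘ (−w₀) ∘ κ`, where
`κ π (t) = π (T − t) − π T` is path reversal, `g` is the action of `w₀` on `V`, and
`P_{w₀}` is computed along the word `l`. -/
noncomputable def schuetz {V : Type*} [AddCommGroup V] [Module ℝ V] {B : Type*}
    (T : ℝ) (α : B → V) (αv : B → Module.Dual ℝ V) (l : List B) (g : V → V)
    (π : ℝ → V) : ℝ → V :=
  pitmanWord α αv l (fun t => -(g (π (T - t) - π T)))

/-!
After rescaling the roots, an alternating composition of two Pitman transforms is given by infima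
over chains of times, weighted by the coefficients `sin (k * π / m) / sin (π / m)`. The coefficient
with `k = m` vanishes, which gives the braid relation of length `m`. The simple roots are linearly
independent because the finite group `W` admits an invariant inner product, so that Matsumoto's
theorem follows from the positivity of roots, and `P_w` does not depend on the reduced word.

Since a reduced word of `w₀` can be chosen to start or end with any generator, `P_{w₀}` has
dominant values and `P_{w₀} ∘ P_s = P_{w₀}`. Moreover `P_s ∘ κ ∘ P_s = P_s ∘ κ`, and `-w₀` permutes
the simple roots up to positive factors. Hence `I ∘ P_s = I`, which gives (i), (ii) and (iii), as
`(-w₀) ∘ κ` is an involution. For (iv), a Pitman transform either moves the endpoint of a path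
within its `W`-orbit or makes it longer for the invariant inner product. The endpoints of `Iπ` and
`P_{w₀} π` are exchanged by `I` up to `w₀`, so neither is longer, and they are dominant vectors of
one `W`-orbit. Such vectors are equal.
-/

section RunningInfimum

open Set

/-- The infimum of `f` over `[a, b]`. With `a = 0` it is the running infimum subtracted by the
Pitman transform; over the empty interval, where `b < a`, it is `0`. -/
noncomputable def infIcc (f : ℝ → ℝ) (a b : ℝ) : ℝ := sInf (f '' Icc a b)

variable {f g : ℝ → ℝ} {a b c r s : ℝ}

theorem infIcc_of_lt (h : b < a) : infIcc f a b = 0 := by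
  simp [infIcc, Icc_eq_empty h.not_ge]

@[simp]
theorem infIcc_self : infIcc f a a = f a := by
  simp [infIcc]

theorem exists_eq_infIcc (hf : ContinuousOn f (Icc a b)) (hab : a ≤ b) :
    ∃ s ∈ Icc a b, f s = infIcc f a b :=
  (isCompact_Icc.image_of_continuousOn hf).sInf_mem ((nonempty_Icc.2 hab).image f)

theorem infIcc_le (hf : ContinuousOn f (Icc a b)) (hs : s ∈ Icc a b) : infIcc f a b ≤ f s :=
  csInf_le (isCompact_Icc.image_of_continuousOn hf).bddBelow (mem_image_of_mem f hs)

theorem le_infIcc_iff (hf : ContinuousOn f (Icc a b)) (hab : a ≤ b) :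
    c ≤ infIcc f a b ↔ ∀ s ∈ Icc a b, c ≤ f s := by
  refine ⟨fun h s hs => h.trans (infIcc_le hf hs), fun h => ?_⟩
  obtain ⟨s, hs, hfs⟩ := exists_eq_infIcc hf hab
  exact hfs ▸ h s hs

theorem infIcc_congr (h : EqOn f g (Icc a b)) : infIcc f a b = infIcc g a b := by
  rw [infIcc, h.image_eq, infIcc]

theorem infIcc_eq_min (hf : Continuous f) (hab : a ≤ b) (hbc : b ≤ c) :
    infIcc f a c = min (infIcc f a b) (infIcc f b c) := by
  refine eq_of_forall_le_iff fun d => ?_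
  rw [le_min_iff, le_infIcc_iff hf.continuousOn (hab.trans hbc), le_infIcc_iff hf.continuousOn hab,
    le_infIcc_iff hf.continuousOn hbc, ← Icc_union_Icc_eq_Icc hab hbc]
  simp only [mem_union, or_imp, forall_and]

theorem infIcc_const_mul (hc : 0 ≤ c) : infIcc (fun t => c * f t) a b = c * infIcc f a b := by
  simp only [infIcc, sInf_image', Real.mul_iInf_of_nonneg hc]

theorem infIcc_zero_fun : infIcc (fun _ => 0) a b = 0 := by
  simpa using infIcc_const_mul (f := fun _ => 0) (a := a) (b := b) le_rfl

theorem infIcc_sub_left (f : ℝ → ℝ) (a b c : ℝ) :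
    infIcc (fun t => f (c - t)) a b = infIcc f (c - b) (c - a) := by
  rw [infIcc, infIcc, ← image_const_sub_Icc, image_image]

theorem infIcc_sub_const (hf : ContinuousOn f (Icc a b)) (hab : a ≤ b) (c : ℝ) :
    infIcc (fun t => f t - c) a b = infIcc f a b - c := by
  have hfc : ContinuousOn (fun t => f t - c) (Icc a b) := hf.sub continuousOn_const
  refine eq_of_forall_le_iff fun d => ?_
  rw [le_sub_iff_add_le, le_infIcc_iff hf hab, le_infIcc_iff hfc hab]
  simp only [le_sub_iff_add_le]

theorem continuous_infIcc_zero (hf : Continuous f) (h0 : f 0 = 0) : Continuous (infIcc f 0) := by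
  have hrescale : infIcc f 0 = fun t => sInf ((fun u => f (u * max t 0)) '' Icc 0 1) := by
    funext t
    rcases lt_or_ge t 0 with ht | ht
    · simp [infIcc_of_lt ht, max_eq_right ht.le, h0]
    · rw [max_eq_left ht, ← image_image f, image_mul_right_Icc zero_le_one ht, zero_mul, one_mul,
        infIcc]
  rw [hrescale]
  refine isCompact_Icc.continuous_sInf (f := fun t u => f (u * max t 0)) ?_
  exact hf.comp (continuous_snd.mul (continuous_fst.max continuous_const))

theorem exists_first_passage (hf : ContinuousOn f (Icc a b)) (hab : a ≤ b) (ha : r ≤ f a)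
    (hr : infIcc f a b ≤ r) : ∃ s ∈ Icc a b, f s = r ∧ ∀ q ∈ Icc a s, r ≤ f q := by
  have hcross {q : ℝ} (hq : q ∈ Icc a b) (hfq : f q ≤ r) : ∃ s ∈ Icc a q, f s = r :=
    intermediate_value_Icc' hq.1 (hf.mono (Icc_subset_Icc_right hq.2)) ⟨hfq, ha⟩
  obtain ⟨p, hp, hfp⟩ := exists_eq_infIcc hf hab
  obtain ⟨p', hp', hfp'⟩ := hcross hp (hfp.trans_le hr)
  have hclosed : IsCompact (Icc a b ∩ f ⁻¹' {r}) :=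
    isCompact_Icc.of_isClosed_subset (hf.preimage_isClosed_of_isClosed isClosed_Icc
      isClosed_singleton) inter_subset_left
  obtain ⟨s, ⟨hs, hfs⟩, hmin⟩ := hclosed.exists_isLeast ⟨p', ⟨hp'.1, hp'.2.trans hp.2⟩, hfp'⟩
  refine ⟨s, hs, hfs, fun q hq => le_of_not_gt fun hlt => ?_⟩
  have hqb : q ∈ Icc a b := ⟨hq.1, hq.2.trans hs.2⟩
  obtain ⟨q', hq', hfq'⟩ := hcross hqb hlt.le
  have hsq : s ≤ q := (hmin ⟨⟨hq'.1, hq'.2.trans hqb.2⟩, hfq'⟩).trans hq'.2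
  exact hlt.ne (le_antisymm hq.2 hsq ▸ hfs)

-- If `f` stays above its running infimum at `a` up to time `b`, both sides equal
-- `infIcc f a b - 2 * infIcc f 0 a`; otherwise `f - 2 * infIcc f 0` is minimal at the first time
-- after `a` at which `f` reaches the level `infIcc f 0 a`.
theorem infIcc_sub_two_mul_infIcc (hf : Continuous f) (h0 : f 0 = 0) (ha : 0 ≤ a) (hab : a ≤ b) :
    infIcc (fun s => f s - 2 * infIcc f 0 s) a b
      = infIcc f a b - infIcc f 0 a - infIcc f 0 b := by
  have hg : Continuous fun s => f s - 2 * infIcc f 0 s :=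
    hf.sub (continuous_const.mul (continuous_infIcc_zero hf h0))
  have hb : infIcc f 0 b = min (infIcc f 0 a) (infIcc f a b) := infIcc_eq_min hf ha hab
  refine le_antisymm ?_ ((le_infIcc_iff hg.continuousOn hab).2 fun s hs => ?_)
  · rcases le_total (infIcc f 0 a) (infIcc f a b) with h | h
    · obtain ⟨s, hs, hfs⟩ := exists_eq_infIcc hf.continuousOn hab
      have hsb : infIcc f 0 b = min (infIcc f 0 s) (infIcc f s b) :=
        infIcc_eq_min hf (ha.trans hs.1) hs.2
      have hle := infIcc_le hg.continuousOn hs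
      rw [min_eq_left h] at hb
      linarith [min_le_left (infIcc f 0 s) (infIcc f s b)]
    · obtain ⟨s, hs, hfs, hmin⟩ := exists_first_passage hf.continuousOn hab
        (infIcc_le hf.continuousOn ⟨ha, le_rfl⟩) h
      have hs0 : infIcc f 0 s = infIcc f 0 a := by
        rw [infIcc_eq_min hf ha hs.1]
        exact min_eq_left ((le_infIcc_iff hf.continuousOn hs.1).2 hmin)
      have hle := infIcc_le hg.continuousOn hs
      rw [min_eq_right h] at hb
      linarith
  · have hsle : infIcc f 0 s ≤ f s := infIcc_le hf.continuousOn ⟨ha.trans hs.1, le_rfl⟩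
    have hmle : infIcc f a b ≤ f s := infIcc_le hf.continuousOn hs
    have hsb : infIcc f 0 b = min (infIcc f 0 s) (infIcc f s b) :=
      infIcc_eq_min hf (ha.trans hs.1) hs.2
    have hsa : infIcc f 0 s = min (infIcc f 0 a) (infIcc f a s) := infIcc_eq_min hf ha hs.1
    have hsb' := hsb.trans_le (min_le_left _ _)
    have hsa' := hsa.trans_le (min_le_left _ _)
    rcases le_total (infIcc f 0 a) (infIcc f a b) with h | h
    · rw [min_eq_left h] at hb
      linarith
    · rw [min_eq_right h] at hb
      linarith

theorem le_infIcc_add_infIcc_iff (hf : Continuous f) (hg : Continuous g) (h0 : g 0 = 0)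
    (hb : 0 ≤ b) :
    c ≤ infIcc (fun s => f s + infIcc g 0 s) 0 b ↔ ∀ a ∈ Icc 0 b, c ≤ g a + infIcc f a b := by
  have hsum : Continuous fun s => f s + infIcc g 0 s := hf.add (continuous_infIcc_zero hg h0)
  have hleft : c ≤ infIcc (fun s => f s + infIcc g 0 s) 0 b
      ↔ ∀ s ∈ Icc 0 b, ∀ a ∈ Icc 0 s, c - f s ≤ g a := by
    rw [le_infIcc_iff hsum.continuousOn hb]
    refine forall₂_congr fun s hs => ?_
    rw [← sub_le_iff_le_add', le_infIcc_iff hg.continuousOn hs.1]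
  have hright : (∀ a ∈ Icc 0 b, c ≤ g a + infIcc f a b)
      ↔ ∀ a ∈ Icc 0 b, ∀ s ∈ Icc a b, c - g a ≤ f s := by
    refine forall₂_congr fun a ha => ?_
    rw [← sub_le_iff_le_add', le_infIcc_iff hf.continuousOn ha.2]
  rw [hleft, hright]
  constructor
  · intro h a ha s hs
    linarith [h s ⟨ha.1.trans hs.1, hs.2⟩ a ⟨ha.1, hs.1⟩]
  · intro h s hs a ha
    linarith [h a ⟨ha.1, ha.2.trans hs.2⟩ s ⟨ha.2, hs.2⟩]

theorem infIcc_reflected_add_infIcc (hf : Continuous f) (hf0 : f 0 = 0) (hg : Continuous g)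
    (hg0 : g 0 = 0) (hc : 0 ≤ c) :
    infIcc (fun s => c * (f s - 2 * infIcc f 0 s)
        + infIcc (fun a => g a + c * infIcc f 0 a) 0 s) 0 b
      = infIcc (fun s => c * f s + infIcc g 0 s) 0 b - c * infIcc f 0 b := by
  rcases lt_or_ge b 0 with hb | hb
  · simp [infIcc_of_lt hb]
  have hinf := continuous_infIcc_zero hf hf0
  have hinf0 : g 0 + c * infIcc f 0 0 = 0 := by simp [hg0, hf0]
  refine eq_of_forall_le_iff fun d => ?_
  rw [le_infIcc_add_infIcc_iff (by fun_prop) (by fun_prop) hinf0 hb, le_sub_iff_add_le,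
    le_infIcc_add_infIcc_iff (by fun_prop) hg hg0 hb]
  refine forall₂_congr fun a ha => ?_
  rw [infIcc_const_mul hc, infIcc_const_mul hc, infIcc_sub_two_mul_infIcc hf hf0 ha.1 ha.2]
  constructor <;> intro h <;> linarith

end RunningInfimum

section RankTwo

open Real Polynomial

/-- The coefficients `U 0 = 0`, `U 1 = 1`, `U (k + 2) = c * U (k + 1) - U k` that govern all rank
two computations. For `c = 2 * cos θ` they are `sin (k * θ) / sin θ`. -/
noncomputable def rankTwoCoeff (c : ℝ) (k : ℕ) : ℝ := (Chebyshev.S ℝ (k - 1)).eval c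

variable {c : ℝ} {m k : ℕ}

@[simp]
theorem rankTwoCoeff_zero : rankTwoCoeff c 0 = 0 := by
  simp [rankTwoCoeff]

@[simp]
theorem rankTwoCoeff_one : rankTwoCoeff c 1 = 1 := by
  simp [rankTwoCoeff]

theorem mul_rankTwoCoeff_add_one (c : ℝ) (k : ℕ) :
    c * rankTwoCoeff c (k + 1) = rankTwoCoeff c (k + 2) + rankTwoCoeff c k := by
  have h := Chebyshev.S_add_one ℝ k
  simp only [rankTwoCoeff]
  push_cast
  rw [add_sub_cancel_right, show (k + 2 - 1 : ℤ) = k + 1 by ring, h]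
  simp

theorem rankTwoCoeff_two_mul_cos_mul_sin (θ : ℝ) (k : ℕ) :
    rankTwoCoeff (2 * cos θ) k * sin θ = sin (k * θ) := by
  simp [rankTwoCoeff, Chebyshev.S_two_mul_real_cos]

theorem two_le_of_ne_zero_of_ne_one (h0 : m ≠ 0) (h1 : m ≠ 1) : (2 : ℝ) ≤ m :=
  mod_cast (Nat.two_le_iff m).2 ⟨h0, h1⟩

theorem sin_pi_div_natCast_pos (h0 : m ≠ 0) (h1 : m ≠ 1) : 0 < sin (π / m) := by
  have hm := two_le_of_ne_zero_of_ne_one h0 h1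
  exact sin_pos_of_pos_of_lt_pi (by positivity) (div_lt_self pi_pos (by linarith))

-- Here `m = 0` stands for `m = ∞`, and `π / 0 = 0` gives the correct value `2 * cos 0 = 2`.
theorem cos_pi_div_natCast_nonneg (h1 : m ≠ 1) : 0 ≤ cos (π / m) := by
  rcases eq_or_ne m 0 with rfl | h0
  · simp
  have hm := two_le_of_ne_zero_of_ne_one h0 h1
  exact cos_nonneg_of_neg_pi_div_two_le_of_le
    ((by linarith [pi_pos] : -(π / 2) ≤ 0).trans (by positivity)) (by gcongr)

theorem rankTwoCoeff_nonneg (h1 : m ≠ 1) (hk : m ≠ 0 → k ≤ m) :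
    0 ≤ rankTwoCoeff (2 * cos (π / m)) k := by
  rcases eq_or_ne m 0 with rfl | h0
  · simp [rankTwoCoeff, Chebyshev.S_eval_two]
  have hkm : (k : ℝ) * (π / m) ≤ π := by
    have : (k : ℝ) ≤ m := mod_cast hk h0
    calc (k : ℝ) * (π / m) ≤ m * (π / m) := by gcongr
      _ = π := by field_simp
  refine nonneg_of_mul_nonneg_left ?_ (sin_pi_div_natCast_pos h0 h1)
  rw [rankTwoCoeff_two_mul_cos_mul_sin]
  exact sin_nonneg_of_nonneg_of_le_pi (by positivity) hkm

theorem rankTwoCoeff_two_mul_cos_pi_div_self (h1 : m ≠ 1) :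
    rankTwoCoeff (2 * cos (π / m)) m = 0 := by
  rcases eq_or_ne m 0 with rfl | h0
  · simp
  refine (mul_eq_zero_iff_right (sin_pi_div_natCast_pos h0 h1).ne').1 ?_
  rw [rankTwoCoeff_two_mul_cos_mul_sin, mul_div_cancel₀ _ (Nat.cast_ne_zero.2 h0), sin_pi]

end RankTwo

section AlternatingSequence

/-- The sequence `a, b, a, b, …`. -/
def altSeq {X : Type*} (a b : X) (n : ℕ) : X := if Even n then a else b

theorem altSeq_add_one {X : Type*} (a b : X) (n : ℕ) : altSeq a b (n + 1) = altSeq b a n := by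
  simp only [altSeq, Nat.even_add_one, ite_not]

end AlternatingSequence

section ChainInfimum

/-- The infimum, over chains `t ≥ u₁ ≥ ⋯ ≥ uₙ ≥ 0`, of the sum of `U (i + j) * z (n - j) uⱼ` over
`1 ≤ j ≤ n`. An iterated Pitman transform in two simple roots is given by such infima. -/
noncomputable def chainInf (U : ℕ → ℝ) (z : ℕ → ℝ → ℝ) : ℕ → ℕ → ℝ → ℝ
  | _, 0 => fun _ => 0
  | i, n + 1 => infIcc (fun s => U (i + 1) * z n s + chainInf U z (i + 1) n s) 0

variable {U : ℕ → ℝ} {z : ℕ → ℝ → ℝ}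

theorem chainInf_zero_right (hz : ∀ k, z k 0 = 0) (i n : ℕ) : chainInf U z i n 0 = 0 := by
  induction n generalizing i with
  | zero => rfl
  | succ n ih => simp [chainInf, hz, ih]

theorem continuous_chainInf (hz : ∀ k, Continuous (z k)) (hz0 : ∀ k, z k 0 = 0) (i n : ℕ) :
    Continuous (chainInf U z i n) := by
  induction n generalizing i with
  | zero => exact continuous_const
  | succ n ih =>
    exact continuous_infIcc_zero ((continuous_const.mul (hz n)).add (ih (i + 1)))
      (by simp [hz0, chainInf_zero_right hz0])

theorem chainInf_add_one_of_eq_zero {i n : ℕ} (h : U (i + n + 1) = 0) :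
    chainInf U z i (n + 1) = chainInf U (fun k => z (k + 1)) i n := by
  induction n generalizing i with
  | zero =>
    rw [add_zero] at h
    funext t
    simp [chainInf, h, infIcc_zero_fun]
  | succ n ih =>
    rw [chainInf, ih (by rwa [add_right_comm i 1 n]), chainInf]

variable {x y : ℝ → ℝ} {c : ℝ} {N : ℕ}

-- The two parities feed each other: the odd case follows from the even one by the recursion of `U`,
-- the even case from the odd one by `infIcc_reflected_add_infIcc`.
theorem chainInf_altSeq_reflected (hU : ∀ k ≤ N, 0 ≤ U k)
    (hUc : ∀ k, c * U (k + 1) = U (k + 2) + U k) (hx : Continuous x) (hx0 : x 0 = 0)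
    (hy : Continuous y) (hy0 : y 0 = 0) {i n : ℕ} (hN : i + n + 1 ≤ N) :
    chainInf U (altSeq (fun t => y t + c * infIcc x 0 t) (fun t => x t - 2 * infIcc x 0 t)) i n =
      if Even n then fun t => chainInf U (altSeq x y) i (n + 1) t - U (i + 1) * infIcc x 0 t
      else infIcc (fun t => U (i + 1) * y t + chainInf U (altSeq x y) (i + 1) n t
        + U i * infIcc x 0 t) 0 := by
  induction n generalizing i with
  | zero =>
    funext t
    simp [chainInf, altSeq, infIcc_const_mul (hU (i + 1) hN)]
  | succ n ih =>
    rw [chainInf, ih (by lia)]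
    rcases Nat.even_or_odd n with hn | hn
    · rw [if_pos hn, if_neg (by simpa [Nat.even_add_one] using hn)]
      congr! 2 with t
      have hUt := congrArg (· * infIcc x 0 t) (hUc i)
      simp only [altSeq, hn, if_true] at hUt ⊢
      linear_combination hUt
    · have hn' := Nat.not_even_iff_odd.2 hn
      rw [if_neg hn', if_pos (by simpa [Nat.even_add_one] using hn)]
      have hz k : Continuous (altSeq x y k) := by unfold altSeq; split_ifs <;> assumption
      have hz0 k : altSeq x y k 0 = 0 := by unfold altSeq; split_ifs <;> assumption
      have hchain := continuous_chainInf (U := U) hz hz0 (i + 2) n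
      have hchain0 := chainInf_zero_right (U := U) hz0 (i + 2) n
      funext t
      simp only [chainInf, altSeq_add_one]
      simp only [altSeq, hn', if_false]
      exact infIcc_reflected_add_infIcc hx hx0 (g := fun s => U (i + 2) * y s
        + chainInf U (altSeq x y) (i + 2) n s) (by fun_prop) (by simp [hy0, hchain0])
        (hU (i + 1) (by lia))

end ChainInfimum

section CartanPair

open Real

/-- The relation between the numbers `a = α_s∨(α_t)` and `b = α_t∨(α_s)` attached to two simple
reflections whose product has order `m`, where `m = 0` stands for infinite order as in
`CoxeterMatrix`. -/
def IsCartanPair (m : ℕ) (a b : ℝ) : Prop :=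
  (m = 2 ∧ a = 0 ∧ b = 0) ∨ (a < 0 ∧ b < 0 ∧ a * b = 4 * cos (π / m) ^ 2)

variable {m : ℕ} {a b : ℝ}

theorem IsCartanPair.mul_eq (h : IsCartanPair m a b) : a * b = 4 * cos (π / m) ^ 2 := by
  rcases h with ⟨rfl, ha, -⟩ | ⟨-, -, hab⟩
  exacts [by simp [ha], hab]

theorem IsCartanPair.exists_rescale (h : IsCartanPair m a b) (h1 : m ≠ 1) :
    ∃ κ > 0, κ * a = -(2 * cos (π / m)) ∧ κ⁻¹ * b = -(2 * cos (π / m)) := by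
  rcases h with ⟨rfl, rfl, rfl⟩ | ⟨ha, hb, hab⟩
  · exact ⟨1, one_pos, by simp, by simp⟩
  · have hcos : 0 < cos (π / m) := (cos_pi_div_natCast_nonneg h1).lt_of_ne' fun h0 => by
      simp [h0, ha.ne, hb.ne] at hab
    refine ⟨2 * cos (π / m) / -a, div_pos (by positivity) (neg_pos.2 ha), ?_, ?_⟩
    · field_simp [ha.ne]
    · field_simp [ha.ne]
      linarith

theorem IsCartanPair.exists_rescale_family {B : Type*} {s t : B} (h : IsCartanPair m a b)
    (h1 : m ≠ 1) (hst : s ≠ t) :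
    ∃ k : B → ℝ, (∀ r, 0 < k r) ∧ k t * ((k s)⁻¹ * a) = -(2 * cos (π / m))
      ∧ k s * ((k t)⁻¹ * b) = -(2 * cos (π / m)) := by
  classical
  obtain ⟨κ, hκ, ha, hb⟩ := h.exists_rescale h1
  refine ⟨Function.update (fun _ => 1) t κ, fun r => ?_, ?_⟩
  · rw [Function.update_apply]
    split_ifs
    exacts [hκ, one_pos]
  · simp [Function.update_of_ne hst, ha, hb]

end CartanPair

section Paths

variable {V B : Type*} [AddCommGroup V] [Module ℝ V] {α : B → V} {αv : B → Module.Dual ℝ V}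
  {π π' : ℝ → V} {l : List B} {s t : B} {T : ℝ}

/-- A path in `V` starting at `0`, extended to all times. No topology on `V` is needed, since the
Pitman transforms only see the coordinates of a path along the coroots. -/
structure IsPath (αv : B → Module.Dual ℝ V) (π : ℝ → V) : Prop where
  continuous_coord (s : B) : Continuous fun t => αv s (π t)
  apply_zero : π 0 = 0

/-- Nonnegativity of the coordinates of `π` along the coroots up to time `T`. -/
def IsDominantPath (αv : B → Module.Dual ℝ V) (T : ℝ) (π : ℝ → V) : Prop :=
  ∀ s, ∀ t ∈ Set.Icc 0 T, 0 ≤ αv s (π t)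

theorem IsPath.coord_zero (hπ : IsPath αv π) (s : B) : αv s (π 0) = 0 := by
  simp [hπ.apply_zero]

theorem pitman_apply (a : V) (av : Module.Dual ℝ V) (π : ℝ → V) (t : ℝ) :
    pitman a av π t = π t - infIcc (fun u => av (π u)) 0 t • a := rfl

theorem map_pitman (φ : Module.Dual ℝ V) (a : V) (av : Module.Dual ℝ V) (π : ℝ → V) (t : ℝ) :
    φ (pitman a av π t) = φ (π t) - infIcc (fun u => av (π u)) 0 t * φ a := by
  simp [pitman_apply]

theorem IsPath.pitman (hπ : IsPath αv π) (s : B) (a : V) : IsPath αv (pitman a (αv s) π) where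
  continuous_coord r := by
    have h := hπ.continuous_coord r
    have hinf := continuous_infIcc_zero (hπ.continuous_coord s) (hπ.coord_zero s)
    simp only [map_pitman]
    exact h.sub (hinf.mul continuous_const)
  apply_zero := by simp [pitman_apply, hπ.apply_zero]

theorem pitman_eqOn (a : V) (av : Module.Dual ℝ V) (h : Set.EqOn π π' (Set.Icc 0 T)) :
    Set.EqOn (pitman a av π) (pitman a av π') (Set.Icc 0 T) := fun t ht => by
  have hcoord : Set.EqOn (fun u => av (π u)) (fun u => av (π' u)) (Set.Icc 0 t) :=
    fun u hu => congrArg av (h ⟨hu.1, hu.2.trans ht.2⟩)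
  rw [pitman_apply, pitman_apply, infIcc_congr hcoord, h ht]

theorem pitman_smul_inv_smul (a : V) (av : Module.Dual ℝ V) {k : ℝ} (hk : 0 < k) :
    pitman (k • a) (k⁻¹ • av) = pitman a av := by
  funext π t
  simp only [pitman_apply, LinearMap.smul_apply, smul_eq_mul,
    infIcc_const_mul (inv_nonneg.2 hk.le), smul_smul]
  field_simp

theorem map_pitman_nonneg (hs : αv s (α s) = 2) (hπ : IsPath αv π) {t : ℝ} (ht : 0 ≤ t) :
    0 ≤ αv s (pitman (α s) (αv s) π t) := by
  have hcont := (hπ.continuous_coord s).continuousOn (s := Set.Icc 0 t)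
  have h0 := infIcc_le hcont ⟨le_rfl, ht⟩
  have ht' := infIcc_le hcont ⟨ht, le_rfl⟩
  rw [map_pitman, hs]
  linarith [hπ.coord_zero s]

theorem pitman_eqOn_self (hπ : IsPath αv π) (h : ∀ t ∈ Set.Icc 0 T, 0 ≤ αv s (π t)) (a : V) :
    Set.EqOn (pitman a (αv s) π) π (Set.Icc 0 T) := fun t ht => by
  have hcont := (hπ.continuous_coord s).continuousOn (s := Set.Icc 0 t)
  have hle := infIcc_le hcont ⟨le_rfl, ht.1⟩
  have hge := (le_infIcc_iff hcont ht.1).2 fun u hu => h u ⟨hu.1, hu.2.trans ht.2⟩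
  rw [hπ.coord_zero s] at hle
  simp [pitman_apply, le_antisymm hle hge]

theorem pitman_eq_self (hπ : IsPath αv π) (h : ∀ t, 0 ≤ t → 0 ≤ αv s (π t)) (a : V) :
    pitman a (αv s) π = π := by
  funext t
  rcases lt_or_ge t 0 with ht | ht
  · simp [pitman_apply, infIcc_of_lt ht]
  · exact pitman_eqOn_self hπ (fun u hu => h u hu.1) a ⟨ht, le_rfl⟩

theorem pitman_pitman (hs : αv s (α s) = 2) (hπ : IsPath αv π) :
    pitman (α s) (αv s) (pitman (α s) (αv s) π) = pitman (α s) (αv s) π :=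
  pitman_eq_self (hπ.pitman s (α s)) (fun _ ht => map_pitman_nonneg hs hπ ht) (α s)

theorem pitmanWord_nil : pitmanWord α αv [] π = π := rfl

theorem pitmanWord_cons :
    pitmanWord α αv (s :: l) π = pitman (α s) (αv s) (pitmanWord α αv l π) := rfl

theorem pitmanWord_append (l l' : List B) :
    pitmanWord α αv (l ++ l') π = pitmanWord α αv l (pitmanWord α αv l' π) := by
  induction l with
  | nil => rfl
  | cons s l ih => rw [List.cons_append, pitmanWord_cons, ih, pitmanWord_cons]

theorem IsPath.pitmanWord (hπ : IsPath αv π) (l : List B) : IsPath αv (pitmanWord α αv l π) := by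
  induction l with
  | nil => exact hπ
  | cons s l ih => exact ih.pitman s (α s)

theorem pitmanWord_eqOn (l : List B) (h : Set.EqOn π π' (Set.Icc 0 T)) :
    Set.EqOn (pitmanWord α αv l π) (pitmanWord α αv l π') (Set.Icc 0 T) := by
  induction l with
  | nil => exact h
  | cons s l ih => exact pitman_eqOn (α s) (αv s) ih

theorem pitmanWord_eqOn_self (hπ : IsPath αv π) (h : IsDominantPath αv T π) (l : List B) :
    Set.EqOn (pitmanWord α αv l π) π (Set.Icc 0 T) := by
  induction l with
  | nil => exact fun _ _ => rfl
  | cons s l ih => exact (pitman_eqOn (α s) (αv s) ih).trans (pitman_eqOn_self hπ (h s) (α s))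

theorem pitmanWord_rescale {k : B → ℝ} (hk : ∀ s, 0 < k s) (l : List B) :
    pitmanWord (fun s => k s • α s) (fun s => (k s)⁻¹ • αv s) l = pitmanWord α αv l := by
  funext π
  induction l with
  | nil => rfl
  | cons s l ih => rw [pitmanWord_cons, ih, pitman_smul_inv_smul _ _ (hk s), pitmanWord_cons]

end Paths

section BraidRelation

open CoxeterSystem

variable {V B : Type*} [AddCommGroup V] [Module ℝ V] {α : B → V} {αv : B → Module.Dual ℝ V}
  {π : ℝ → V} {s t : B} {c : ℝ} {N : ℕ}

/-- The coefficients of the roots subtracted by the Pitman transforms along the alternating word of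
length `n` in `s` and `t` that ends in `t`. -/
noncomputable def altChainInf (c : ℝ) (αv : B → Module.Dual ℝ V) (s t : B) (π : ℝ → V) :
    ℕ → ℝ → ℝ :=
  chainInf (rankTwoCoeff c) (altSeq (fun u => αv t (π u)) (fun u => αv s (π u))) 0

theorem altChainInf_pitman (hU : ∀ k ≤ N, 0 ≤ rankTwoCoeff c k) (ht : αv t (α t) = 2)
    (hst : αv s (α t) = -c) (hπ : IsPath αv π) {n : ℕ} (hN : n + 1 ≤ N) (u : ℝ) :
    altChainInf c αv t s (pitman (α t) (αv t) π) n u =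
      altChainInf c αv s t π (n + 1) u
        - if Even n then infIcc (fun u => αv t (π u)) 0 u else 0 := by
  have hs' : (fun u => αv s (pitman (α t) (αv t) π u))
      = fun u => αv s (π u) + c * infIcc (fun u => αv t (π u)) 0 u := by
    funext u
    rw [map_pitman, hst]
    ring
  have ht' : (fun u => αv t (pitman (α t) (αv t) π u))
      = fun u => αv t (π u) - 2 * infIcc (fun u => αv t (π u)) 0 u := by
    funext u
    rw [map_pitman, ht, mul_comm]
  rw [altChainInf, altChainInf, hs', ht',
    chainInf_altSeq_reflected hU (mul_rankTwoCoeff_add_one c) (hπ.continuous_coord t)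
      (hπ.coord_zero t) (hπ.continuous_coord s) (hπ.coord_zero s) (by lia)]
  split_ifs with hn
  · simp
  · simp [chainInf, altSeq, hn]

theorem pitmanWord_alternatingWord (hU : ∀ k ≤ N, 0 ≤ rankTwoCoeff c k) (hs : αv s (α s) = 2)
    (ht : αv t (α t) = 2) (hst : αv s (α t) = -c) (hts : αv t (α s) = -c) (hπ : IsPath αv π)
    {n : ℕ} (hN : n + 1 ≤ N) (u : ℝ) :
    pitmanWord α αv (alternatingWord s t (n + 1)) π u =
      π u - altChainInf c αv s t π (n + 1) u • α (altSeq t s n)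
        - altChainInf c αv s t π n u • α (altSeq s t n) := by
  induction n generalizing s t π with
  | zero => simp [altChainInf, chainInf, altSeq, alternatingWord, pitmanWord_cons, pitmanWord_nil,
      pitman_apply]
  | succ n ih =>
    rw [alternatingWord_succ, List.concat_eq_append, pitmanWord_append, pitmanWord_cons,
      pitmanWord_nil, ih ht hs hts hst (hπ.pitman t (α t)) (by lia),
      altChainInf_pitman hU ht hst hπ (by lia), altChainInf_pitman hU ht hst hπ (by lia),
      altSeq_add_one, altSeq_add_one, pitman_apply]
    simp only [altSeq, Nat.even_add_one]
    split_ifs <;> module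

theorem pitmanWord_braid_of_symm {m : ℕ} (hm : m ≠ 0) (hU : ∀ k ≤ m, 0 ≤ rankTwoCoeff c k)
    (hUm : rankTwoCoeff c m = 0) (hs : αv s (α s) = 2) (ht : αv t (α t) = 2)
    (hst : αv s (α t) = -c) (hts : αv t (α s) = -c) (hπ : IsPath αv π) :
    pitmanWord α αv (alternatingWord s t m) π = pitmanWord α αv (alternatingWord t s m) π := by
  obtain ⟨n, rfl⟩ := Nat.exists_eq_succ_of_ne_zero hm
  have hswap (s t : B) : altChainInf c αv s t π (n + 1) = altChainInf c αv t s π n := by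
    rw [altChainInf, chainInf_add_one_of_eq_zero (by rwa [zero_add])]
    simp only [altSeq_add_one, altChainInf]
  funext u
  rw [pitmanWord_alternatingWord hU hs ht hst hts hπ le_rfl,
    pitmanWord_alternatingWord hU ht hs hts hst hπ le_rfl, hswap s t, hswap t s]
  exact sub_right_comm _ _ _

theorem pitmanWord_braid {m : ℕ} (hm : m ≠ 0) (h1 : m ≠ 1) (hst : s ≠ t) (hs : αv s (α s) = 2)
    (ht : αv t (α t) = 2) (h : IsCartanPair m (αv s (α t)) (αv t (α s))) (hπ : IsPath αv π) :
    pitmanWord α αv (alternatingWord s t m) π = pitmanWord α αv (alternatingWord t s m) π := by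
  obtain ⟨k, hk, hkst, hkts⟩ := h.exists_rescale_family h1 hst
  have hk0 r : k r ≠ 0 := (hk r).ne'
  have hπk : IsPath (fun r => (k r)⁻¹ • αv r) π :=
    ⟨fun r => continuous_const.mul (hπ.continuous_coord r), hπ.apply_zero⟩
  rw [← pitmanWord_rescale (α := α) hk (alternatingWord s t m),
    ← pitmanWord_rescale (α := α) hk (alternatingWord t s m)]
  refine pitmanWord_braid_of_symm hm (fun j hj => rankTwoCoeff_nonneg h1 fun _ => hj)
    (rankTwoCoeff_two_mul_cos_pi_div_self h1) ?_ ?_ ?_ ?_ hπk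
  · simp [hs, hk0]
  · simp [ht, hk0]
  · simpa using hkst
  · simpa using hkts

end BraidRelation

section Reversal

variable {V : Type*} [AddCommGroup V] {π π' : ℝ → V} {T : ℝ}

/-- The path reversal `κ`. -/
def reversedPath (T : ℝ) (π : ℝ → V) : ℝ → V := fun t => π (T - t) - π T

theorem reversedPath_reversedPath (hπ : π 0 = 0) :
    reversedPath T (reversedPath T π) = π := by
  funext t
  simp [reversedPath, hπ]

/-- The transform `(-w₀) ∘ κ` of paths, where `g` is the action of `w₀`. -/
def dualPath (T : ℝ) (g : V → V) (π : ℝ → V) : ℝ → V := fun t => -g (reversedPath T π t)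

theorem dualPath_eqOn (hT : 0 ≤ T) (g : V → V) (h : Set.EqOn π π' (Set.Icc 0 T)) :
    Set.EqOn (dualPath T g π) (dualPath T g π') (Set.Icc 0 T) := fun t ht => by
  rw [dualPath, dualPath, reversedPath, reversedPath, h ⟨sub_nonneg.2 ht.2, sub_le_self T ht.1⟩,
    h ⟨hT, le_rfl⟩]

variable {B : Type*} [Module ℝ V] {α : B → V} {αv : B → Module.Dual ℝ V} {s : B}

theorem IsPath.reversedPath (hπ : IsPath αv π) (T : ℝ) : IsPath αv (reversedPath T π) where
  continuous_coord s := by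
    simp only [_root_.reversedPath, map_sub]
    exact ((hπ.continuous_coord s).comp (continuous_const.sub continuous_id)).sub continuous_const
  apply_zero := by simp [_root_.reversedPath]

theorem pitman_reversedPath_pitman (hs : αv s (α s) = 2) (hπ : IsPath αv π) :
    Set.EqOn (pitman (α s) (αv s) (reversedPath T (pitman (α s) (αv s) π)))
      (pitman (α s) (αv s) (reversedPath T π)) (Set.Icc 0 T) := fun t ht => by
  set x : ℝ → ℝ := fun u => αv s (π u) with hx
  have hxc : Continuous x := hπ.continuous_coord s
  have hinf := continuous_infIcc_zero hxc (hπ.coord_zero s)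
  have hcoord : (fun u => αv s (reversedPath T (pitman (α s) (αv s) π) u))
      = fun u => (x (T - u) - 2 * infIcc x 0 (T - u)) - (x T - 2 * infIcc x 0 T) := by
    funext u
    simp only [reversedPath, map_sub, map_pitman, hs, hx]
    ring
  have hcoord' : (fun u => αv s (reversedPath T π u)) = fun u => x (T - u) - x T := by
    funext u
    simp only [reversedPath, map_sub, hx]
  have hkey : infIcc (fun u => αv s (reversedPath T (pitman (α s) (αv s) π) u)) 0 t
      = infIcc (fun u => αv s (reversedPath T π u)) 0 t + infIcc x 0 T - infIcc x 0 (T - t) := by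
    rw [hcoord, hcoord', infIcc_sub_const (by fun_prop) ht.1, infIcc_sub_const (by fun_prop) ht.1,
      infIcc_sub_left x, infIcc_sub_left (fun u => x u - 2 * infIcc x 0 u), sub_zero,
      infIcc_sub_two_mul_infIcc hxc (hπ.coord_zero s) (sub_nonneg.2 ht.2)
        (sub_le_self T ht.1)]
    ring
  rw [pitman_apply, hkey, pitman_apply]
  simp only [reversedPath, pitman_apply, ← hx]
  module

end Reversal

section CosetFactorization

open CoxeterSystem

variable {B W : Type*} [Group W] {M : CoxeterMatrix B} {cs : CoxeterSystem M W} {s t : B} {v w : W}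
  {n : ℕ}

/-- `w = v * x`, where `v` is the shortest element of the coset of `w` modulo the subgroup generated
by `s` and `t`, and `x` is the alternating product of length `n` in `s` and `t` that ends in `t`. -/
structure IsCosetFactorization (cs : CoxeterSystem M W) (s t : B) (w v : W) (n : ℕ) : Prop where
  not_isRightDescent_left : ¬ cs.IsRightDescent v s
  not_isRightDescent_right : ¬ cs.IsRightDescent v t
  length_eq : cs.length w = cs.length v + n
  eq_mul : w = v * cs.wordProd (alternatingWord s t n)

namespace IsCosetFactorization

theorem refl (hs : ¬ cs.IsRightDescent w s) (ht : ¬ cs.IsRightDescent w t) :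
    IsCosetFactorization cs s t w w 0 :=
  ⟨hs, ht, rfl, by simp [alternatingWord]⟩

theorem swap (h : IsCosetFactorization cs s t w v 0) : IsCosetFactorization cs t s w v 0 :=
  ⟨h.not_isRightDescent_right, h.not_isRightDescent_left, h.length_eq, h.eq_mul⟩

theorem swap_of_eq (h : IsCosetFactorization cs s t w v n) (hn : n = M s t) :
    IsCosetFactorization cs t s w v n := by
  refine ⟨h.not_isRightDescent_right, h.not_isRightDescent_left, h.length_eq, ?_⟩
  have hbraid := cs.wordProd_braidWord_eq s t
  rw [braidWord, braidWord, M.symmetric t s, ← hn] at hbraid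
  rw [← hbraid, ← h.eq_mul]

theorem mul_simple_eq (h : IsCosetFactorization cs s t w v (n + 1)) :
    w * cs.simple t = v * cs.wordProd (alternatingWord t s n) := by
  rw [h.eq_mul, alternatingWord_succ, cs.wordProd_concat, mul_assoc, mul_assoc,
    cs.simple_mul_simple_self, mul_one]

theorem isRightDescent (h : IsCosetFactorization cs s t w v (n + 1)) : cs.IsRightDescent w t := by
  have hmul := cs.length_mul_le v (cs.wordProd (alternatingWord t s n))
  have hword := cs.length_wordProd_le (alternatingWord t s n)
  rw [length_alternatingWord] at hword
  rw [IsRightDescent, h.mul_simple_eq, h.length_eq]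
  lia

theorem mul_simple (h : IsCosetFactorization cs s t w v n) (hs : ¬ cs.IsRightDescent w s) :
    IsCosetFactorization cs t s (w * cs.simple s) v (n + 1) := by
  refine ⟨h.not_isRightDescent_right, h.not_isRightDescent_left, ?_, ?_⟩
  · rw [cs.not_isRightDescent_iff.1 hs, h.length_eq, add_assoc]
  · rw [alternatingWord_succ, cs.wordProd_concat, ← mul_assoc, ← h.eq_mul]

theorem le (h : IsCosetFactorization cs s t w v n) (hM : M s t ≠ 0) : n ≤ M s t := by
  by_contra! hn
  refine cs.not_isReduced_alternatingWord s t hM hn ?_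
  have hmul := cs.length_mul_le v (cs.wordProd (alternatingWord s t n))
  rw [← h.eq_mul, h.length_eq] at hmul
  refine le_antisymm (cs.length_wordProd_le _) ?_
  rw [length_alternatingWord]
  lia

end IsCosetFactorization

theorem exists_isCosetFactorization (cs : CoxeterSystem M W) (s t : B) (w : W) :
    ∃ v n, IsCosetFactorization cs s t w v n ∨ IsCosetFactorization cs t s w v n := by
  induction hN : cs.length w using Nat.strong_induction_on generalizing w with
  | _ N ih =>
    subst hN
    have hdesc (s t : B) (hs : cs.IsRightDescent w s)
        (ih : ∃ v n, IsCosetFactorization cs s t (w * cs.simple s) v n ∨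
          IsCosetFactorization cs t s (w * cs.simple s) v n) :
        ∃ v n, IsCosetFactorization cs t s w v n := by
      have hws := cs.isRightDescent_iff_not_isRightDescent_mul.1 hs
      have hextend {v n} (h : IsCosetFactorization cs s t (w * cs.simple s) v n) :
          IsCosetFactorization cs t s w v (n + 1) := by
        simpa using h.mul_simple hws
      obtain ⟨v, n, h | h⟩ := ih
      · exact ⟨v, n + 1, hextend h⟩
      · cases n with
        | zero => exact ⟨v, 1, hextend h.swap⟩
        | succ n => exact absurd h.isRightDescent hws
    by_cases hs : cs.IsRightDescent w s
    · obtain ⟨v, n, h⟩ := hdesc s t hs (ih _ hs _ rfl)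
      exact ⟨v, n, .inr h⟩
    by_cases ht : cs.IsRightDescent w t
    · obtain ⟨v, n, h⟩ := hdesc t s ht (by simpa only [or_comm] using ih _ ht _ rfl)
      exact ⟨v, n, .inl h⟩
    · exact ⟨w, 0, .inl (.refl hs ht)⟩

end CosetFactorization

section RootPositivity

open CoxeterSystem

variable {V B W : Type*} [AddCommGroup V] [Module ℝ V] [Group W] {M : CoxeterMatrix B}
  {cs : CoxeterSystem M W} {α : B → V} {αv : B → Module.Dual ℝ V} {ρ : W →* V ≃ₗ[ℝ] V} {s t : B}
  {v w : W} {n : ℕ}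

/-- The action `ρ` of a Coxeter group on `V` in which the simple generators act as reflections in
the roots `α s` with coroots `αv s`, with the Cartan pairings prescribed by the Coxeter matrix. -/
structure IsRealization (cs : CoxeterSystem M W) (α : B → V) (αv : B → Module.Dual ℝ V)
    (ρ : W →* V ≃ₗ[ℝ] V) : Prop where
  coroot_root (s : B) : αv s (α s) = 2
  simple_apply (s : B) (x : V) : ρ (cs.simple s) x = x - αv s x • α s
  isCartanPair {s t : B} (hst : s ≠ t) : IsCartanPair (M s t) (αv s (α t)) (αv t (α s))

/-- The cone of nonnegative combinations of the simple roots. -/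
def rootCone (α : B → V) : PointedCone ℝ V := PointedCone.hull ℝ (Set.range α)

theorem root_mem_rootCone (s : B) : α s ∈ rootCone α := PointedCone.subset_hull ⟨s, rfl⟩

theorem exists_linearCombination_of_mem_rootCone {x : V} (hx : x ∈ rootCone α) :
    ∃ c : B →₀ ℝ, 0 ≤ c ∧ Finsupp.linearCombination ℝ α c = x := by
  obtain ⟨c, rfl⟩ := Finsupp.mem_span_range_iff_exists_finsupp.1 hx
  refine ⟨c.mapRange (↑) rfl, fun s => (c s).2, ?_⟩
  rw [Finsupp.linearCombination_apply, Finsupp.sum_mapRange_index fun s => zero_smul ℝ (α s)]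
  rfl

theorem eq_zero_of_mem_rootCone_of_neg_mem (hα : LinearIndependent ℝ α) {x : V}
    (hx : x ∈ rootCone α) (hx' : -x ∈ rootCone α) : x = 0 := by
  obtain ⟨c, hc, rfl⟩ := exists_linearCombination_of_mem_rootCone hx
  obtain ⟨d, hd, hcd⟩ := exists_linearCombination_of_mem_rootCone hx'
  have hsum : c + d = 0 := hα (by simp [hcd])
  rw [((add_eq_zero_iff_of_nonneg hc hd).1 hsum).1, map_zero]

theorem map_alternatingWord_apply {c : ℝ} {a b : V} (hsa : ρ (cs.simple s) a = -a)
    (htb : ρ (cs.simple t) b = -b) (hsb : ρ (cs.simple s) b = b + c • a)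
    (hta : ρ (cs.simple t) a = a + c • b) (n : ℕ) :
    ρ (cs.wordProd (alternatingWord s t n)) a =
      rankTwoCoeff c (n + 1) • altSeq a b n + rankTwoCoeff c n • altSeq b a n := by
  induction n with
  | zero => simp [alternatingWord, altSeq]
  | succ n ih =>
    have hU := mul_rankTwoCoeff_add_one c n
    rw [alternatingWord_succ', cs.wordProd_cons, map_mul, LinearEquiv.mul_apply, ih, map_add,
      map_smul, map_smul, ← sub_eq_iff_eq_add.2 hU, altSeq_add_one, altSeq_add_one]
    simp only [altSeq]
    split_ifs
    · rw [hta, htb]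
      module
    · rw [hsa, hsb]
      module

namespace IsRealization

variable (h : IsRealization cs α αv ρ)
include h

theorem simple_root (s : B) : ρ (cs.simple s) (α s) = -α s := by
  rw [h.simple_apply, h.coroot_root]
  module

theorem map_alternatingWord_root_mem (hst : s ≠ t) (hn : M s t ≠ 0 → n + 1 ≤ M s t) :
    ρ (cs.wordProd (alternatingWord s t n)) (α s) ∈ PointedCone.hull ℝ {α s, α t} := by
  have h1 : M s t ≠ 1 := M.off_diagonal s t hst
  obtain ⟨k, hk, hkst, hkts⟩ := (h.isCartanPair hst).exists_rescale_family h1 hst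
  have hreflect (r r' : B)
      (hc : k r' * ((k r)⁻¹ * αv r (α r')) = -(2 * Real.cos (Real.pi / M s t))) :
      ρ (cs.simple r) (k r' • α r')
        = k r' • α r' + (2 * Real.cos (Real.pi / M s t)) • k r • α r := by
    have hr := (hk r).ne'
    rw [← neg_eq_iff_eq_neg.2 hc, map_smul, h.simple_apply]
    match_scalars <;> field_simp
  have hU := map_alternatingWord_apply (by rw [map_smul, h.simple_root, smul_neg])
    (by rw [map_smul, h.simple_root, smul_neg]) (hreflect s t hkst) (hreflect t s hkts) n
  have hmem (r : B) (hr : α r ∈ ({α s, α t} : Set V)) :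
      k r • α r ∈ PointedCone.hull ℝ {α s, α t} :=
    PointedCone.smul_mem _ (hk r).le (PointedCone.subset_hull hr)
  have hpos j (hj : j ≤ n + 1) := rankTwoCoeff_nonneg h1 fun h0 => hj.trans (hn h0)
  rw [← inv_smul_smul₀ (hk s).ne' (ρ _ (α s)), ← map_smul, hU]
  refine PointedCone.smul_mem _ (inv_nonneg.2 (hk s).le) (add_mem
    (PointedCone.smul_mem _ (hpos (n + 1) le_rfl) ?_) (PointedCone.smul_mem _ (hpos n (by lia)) ?_))
  all_goals
    unfold altSeq
    split_ifs
    all_goals exact hmem _ (by simp)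

theorem map_root_mem_of_isCosetFactorization (hst : s ≠ t)
    (hw : IsCosetFactorization cs s t w v n) (hn : M s t ≠ 0 → n + 1 ≤ M s t)
    (hs : ρ v (α s) ∈ rootCone α) (ht : ρ v (α t) ∈ rootCone α) : ρ w (α s) ∈ rootCone α := by
  rw [hw.eq_mul, map_mul, LinearEquiv.mul_apply]
  have hle : PointedCone.hull ℝ {α s, α t} ≤ (rootCone α).comap (ρ v : V →ₗ[ℝ] V) :=
    Submodule.span_le.2 (Set.pair_subset hs ht)
  exact hle (h.map_alternatingWord_root_mem hst hn)

theorem map_root_mem_rootCone (hs : ¬ cs.IsRightDescent w s) : ρ w (α s) ∈ rootCone α := by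
  induction hN : cs.length w using Nat.strong_induction_on generalizing w s with
  | _ N ih =>
    subst hN
    rcases eq_or_ne w 1 with rfl | h1
    · simpa using root_mem_rootCone s
    obtain ⟨t, ht⟩ := cs.exists_rightDescent_of_ne_one h1
    have hst : s ≠ t := fun hst => hs (hst ▸ ht)
    obtain ⟨v, n, hv | hv⟩ := exists_isCosetFactorization cs s t w
    · have hn : n ≠ 0 := by
        rintro rfl
        exact hv.not_isRightDescent_right (by simpa [hv.eq_mul, alternatingWord] using ht)
      have hlt : cs.length v < cs.length w := by have := hv.length_eq; lia
      refine h.map_root_mem_of_isCosetFactorization hst hv (fun hM => ?_)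
        (ih _ hlt hv.not_isRightDescent_left rfl) (ih _ hlt hv.not_isRightDescent_right rfl)
      refine (hv.le hM).lt_of_ne fun hnM => hs ?_
      obtain ⟨j, rfl⟩ := Nat.exists_eq_succ_of_ne_zero hn
      exact (hv.swap_of_eq hnM).isRightDescent
    · cases n with
      | zero =>
        exact absurd (by simpa [hv.eq_mul, alternatingWord] using ht) hv.not_isRightDescent_left
      | succ n => exact absurd hv.isRightDescent hs

theorem neg_map_root_mem_rootCone (hs : cs.IsRightDescent w s) : -ρ w (α s) ∈ rootCone α := by
  have hws := h.map_root_mem_rootCone (cs.isRightDescent_iff_not_isRightDescent_mul.1 hs)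
  rwa [map_mul, LinearEquiv.mul_apply, h.simple_root, map_neg] at hws

theorem root_ne_zero (s : B) : α s ≠ 0 := fun h0 => by
  simpa [h0] using h.coroot_root s

theorem eq_of_isCosetFactorization (hα : LinearIndependent ℝ α) (hst : s ≠ t)
    (hw : IsCosetFactorization cs s t w v n) (hs : cs.IsRightDescent w s) :
    M s t ≠ 0 ∧ n = M s t := by
  have hn : ¬ (M s t ≠ 0 → n + 1 ≤ M s t) := fun hn => by
    refine h.root_ne_zero s ((ρ w).map_eq_zero_iff.1 ?_)
    exact eq_zero_of_mem_rootCone_of_neg_mem hα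
      (h.map_root_mem_of_isCosetFactorization hst hw hn
        (h.map_root_mem_rootCone hw.not_isRightDescent_left)
        (h.map_root_mem_rootCone hw.not_isRightDescent_right))
      (h.neg_map_root_mem_rootCone hs)
  push Not at hn
  exact ⟨hn.1, le_antisymm (hw.le hn.1) (Nat.le_of_lt_succ hn.2)⟩

theorem exists_isCosetFactorization_of_isRightDescent (hα : LinearIndependent ℝ α) (hst : s ≠ t)
    (hs : cs.IsRightDescent w s) (ht : cs.IsRightDescent w t) :
    M s t ≠ 0 ∧ ∃ v, IsCosetFactorization cs s t w v (M s t) := by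
  obtain ⟨v, n, hw | hw⟩ := exists_isCosetFactorization cs s t w
  · obtain ⟨hM, rfl⟩ := h.eq_of_isCosetFactorization hα hst hw hs
    exact ⟨hM, v, hw⟩
  · obtain ⟨hM, rfl⟩ := h.eq_of_isCosetFactorization hα hst.symm hw ht
    rw [M.symmetric t s] at hM hw
    exact ⟨hM, v, hw.swap_of_eq (M.symmetric s t)⟩

end IsRealization

end RootPositivity

section Matsumoto

open CoxeterSystem

variable {V B W : Type*} [AddCommGroup V] [Module ℝ V] [Group W] {M : CoxeterMatrix B}
  {cs : CoxeterSystem M W} {α : B → V} {αv : B → Module.Dual ℝ V} {ρ : W →* V ≃ₗ[ℝ] V} {s t : B}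
  {v w : W} {l l' : List B}

/-- The braid relations for a family of elements of a monoid. -/
def SatisfiesBraidRelations (M : CoxeterMatrix B) {P : Type*} [Monoid P] (f : B → P) : Prop :=
  ∀ s t, s ≠ t → M s t ≠ 0 →
    ((alternatingWord s t (M s t)).map f).prod = ((alternatingWord t s (M s t)).map f).prod

theorem isRightDescent_of_isReduced_append_singleton (hl : cs.IsReduced (l ++ [s])) :
    cs.IsRightDescent (cs.wordProd (l ++ [s])) s := by
  have hle := cs.length_wordProd_le l
  rw [IsRightDescent, hl.eq, cs.wordProd_append, cs.wordProd_singleton,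
    cs.simple_mul_simple_cancel_right, List.length_append, List.length_singleton]
  lia

theorem IsCosetFactorization.isReduced_append {n : ℕ} (h : IsCosetFactorization cs s t w v n)
    (hl : cs.IsReduced l) (hlv : cs.wordProd l = v) :
    cs.IsReduced (l ++ alternatingWord s t n) := by
  rw [CoxeterSystem.IsReduced, cs.wordProd_append, hlv, ← h.eq_mul, h.length_eq, List.length_append,
    length_alternatingWord, ← hl.eq, hlv]

theorem isReduced_left_of_append (hl : cs.IsReduced (l ++ l')) : cs.IsReduced l := by
  simpa only [List.take_left] using hl.take l.length

theorem prod_map_eq_of_isCosetFactorization {P : Type*} [Monoid P] {f : B → P} {n : ℕ}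
    (hw : IsCosetFactorization cs s t w v (n + 1)) (hl' : cs.IsReduced l')
    (hl'v : cs.wordProd l' = v) (hlw : cs.wordProd (l ++ [t]) = w)
    (ih : ∀ k, cs.IsReduced k → cs.wordProd l = cs.wordProd k → (l.map f).prod = (k.map f).prod) :
    ((l ++ [t]).map f).prod = (l'.map f).prod * ((alternatingWord s t (n + 1)).map f).prod := by
  have hred := hw.isReduced_append hl' hl'v
  rw [alternatingWord_succ, List.concat_eq_append, ← List.append_assoc] at hred
  have hprod : cs.wordProd l = cs.wordProd (l' ++ alternatingWord t s n) := by
    rw [cs.wordProd_append, hl'v, ← hw.mul_simple_eq, ← hlw, cs.wordProd_append,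
      cs.wordProd_singleton, cs.simple_mul_simple_cancel_right]
  simp [alternatingWord_succ, ih _ (isReduced_left_of_append hred) hprod, mul_assoc]

/-- **Matsumoto's theorem** -/
theorem IsRealization.prod_map_eq_of_wordProd_eq (h : IsRealization cs α αv ρ)
    (hα : LinearIndependent ℝ α) {P : Type*} [Monoid P] {f : B → P}
    (hf : SatisfiesBraidRelations M f) (hl : cs.IsReduced l) (hl' : cs.IsReduced l')
    (heq : cs.wordProd l = cs.wordProd l') : (l.map f).prod = (l'.map f).prod := by
  have hlen : l.length = l'.length := by rw [← hl.eq, ← hl'.eq, heq]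
  induction hN : l.length generalizing l l' with
  | zero =>
    rw [List.length_eq_zero_iff.1 hN, List.length_eq_zero_iff.1 (hlen.symm.trans hN)]
  | succ N ih =>
    obtain ⟨k, s, rfl⟩ :=
      (List.eq_nil_or_concat' l).resolve_left (List.ne_nil_of_length_eq_add_one hN)
    obtain ⟨k', t, rfl⟩ := (List.eq_nil_or_concat' l').resolve_left
      (List.ne_nil_of_length_eq_add_one (hlen.symm.trans hN))
    have hk := isReduced_left_of_append hl
    have hk' := isReduced_left_of_append hl'
    simp only [List.length_append, List.length_singleton, Nat.add_right_cancel_iff] at hlen hN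
    have ih' {j j'} (hj : cs.IsReduced j) (hjN : j.length = N) (hj' : cs.IsReduced j')
        (hjj' : cs.wordProd j = cs.wordProd j') : (j.map f).prod = (j'.map f).prod :=
      ih hj hj' hjj' (by rw [← hj.eq, ← hj'.eq, hjj']) hjN
    by_cases hst : s = t
    · subst hst
      simp only [cs.wordProd_append, cs.wordProd_singleton, mul_left_inj] at heq
      simp [ih' hk hN hk' heq]
    obtain ⟨hM, v, hv⟩ := h.exists_isCosetFactorization_of_isRightDescent hα hst
      (isRightDescent_of_isReduced_append_singleton hl)
      (heq ▸ isRightDescent_of_isReduced_append_singleton hl')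
    obtain ⟨m, hm, rfl⟩ := cs.exists_isReduced v
    have hv' := hv.swap_of_eq rfl
    have hbraid := hf s t hst hM
    obtain ⟨n, hn⟩ := Nat.exists_eq_succ_of_ne_zero hM
    rw [hn] at hv hv' hbraid
    rw [prod_map_eq_of_isCosetFactorization hv' hm rfl rfl fun j hj => ih' hk hN hj,
      prod_map_eq_of_isCosetFactorization hv hm rfl heq.symm fun j hj =>
        ih' hk' (hlen ▸ hN) hj, hbraid]

end Matsumoto

section InvariantForm

variable {E W : Type*} [AddCommGroup E] [Module ℝ E] [Group W] {r : W →* E ≃ₗ[ℝ] E}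
  {Q : LinearMap.BilinForm ℝ E}

/-- `Q` is an inner product on `E` that is invariant under the action `r`. -/
structure IsInvariantInner (r : W →* E ≃ₗ[ℝ] E) (Q : LinearMap.BilinForm ℝ E) : Prop where
  isSymm : Q.IsSymm
  pos {x : E} (hx : x ≠ 0) : 0 < Q x x
  map_map (w : W) (x y : E) : Q (r w x) (r w y) = Q x y

theorem exists_inner (E : Type*) [AddCommGroup E] [Module ℝ E] :
    ∃ Q : LinearMap.BilinForm ℝ E, Q.IsSymm ∧ ∀ x ≠ 0, 0 < Q x x := by
  classical
  let b := Module.Free.chooseBasis ℝ E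
  have hself x : b.toDual x x = ∑ i ∈ (b.repr x).support, b.repr x i ^ 2 := by
    nth_rw 2 [← b.linearCombination_repr x]
    simp [Finsupp.linearCombination_apply, Finsupp.sum, b.toDual_apply_left, sq]
  refine ⟨b.toDual, ?_, fun x hx => ?_⟩
  · refine (LinearMap.BilinForm.isSymm_iff_basis b).2 fun i j => ?_
    simp [b.toDual_apply, eq_comm]
  · rw [hself]
    refine Finset.sum_pos (fun i hi => sq_pos_of_ne_zero (Finsupp.mem_support_iff.1 hi)) ?_
    simpa using hx

theorem exists_isInvariantInner [Finite W] (r : W →* E ≃ₗ[ℝ] E) :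
    ∃ Q : LinearMap.BilinForm ℝ E, IsInvariantInner r Q := by
  have := Fintype.ofFinite W
  obtain ⟨Q, hsymm, hpos⟩ := exists_inner E
  have hsum x y : (∑ w, Q.compl₁₂ (r w : E →ₗ[ℝ] E) (r w : E →ₗ[ℝ] E)) x y
      = ∑ w, Q (r w x) (r w y) := by
    simp [LinearMap.sum_apply]
  refine ⟨∑ w, Q.compl₁₂ (r w : E →ₗ[ℝ] E) (r w : E →ₗ[ℝ] E), ⟨⟨fun x y => ?_⟩, ?_, ?_⟩⟩
  · simp only [hsum, hsymm.eq]
  · intro x hx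
    rw [hsum]
    exact Finset.sum_pos (fun w _ => hpos _ ((r w).map_ne_zero_iff.2 hx)) Finset.univ_nonempty
  · intro w x y
    simp only [hsum]
    refine Fintype.sum_equiv (Equiv.mulRight w) _ _ fun v => ?_
    simp [map_mul, LinearEquiv.mul_apply]

end InvariantForm

section LinearIndependence

variable {V B W : Type*} [AddCommGroup V] [Module ℝ V] [Group W] {M : CoxeterMatrix B}
  {cs : CoxeterSystem M W} {α : B → V} {αv : B → Module.Dual ℝ V} {ρ : W →* V ≃ₗ[ℝ] V} {s t : B}

namespace IsRealization

variable (h : IsRealization cs α αv ρ)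
include h

theorem coroot_mul_inner_root {Q : LinearMap.BilinForm ℝ V} (hQ : IsInvariantInner ρ Q) (s : B)
    (x : V) : αv s x * Q (α s) (α s) = 2 * Q (α s) x := by
  have hinv := hQ.map_map (cs.simple s) (α s) x
  rw [h.simple_root, h.simple_apply] at hinv
  simp only [map_neg, map_sub, map_smul, LinearMap.neg_apply, smul_eq_mul] at hinv
  linarith

theorem linearIndependent_pair (hst : s ≠ t) (hM : M s t ≠ 0) :
    LinearIndependent ℝ ![α s, α t] := by
  have hcartan := (h.isCartanPair hst).mul_eq
  have hsin := sin_pi_div_natCast_pos hM (M.off_diagonal s t hst)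
  have hlt : 0 < 4 - αv s (α t) * αv t (α s) := by
    rw [hcartan]
    nlinarith [Real.sin_sq_add_cos_sq (Real.pi / M s t)]
  refine LinearIndependent.pair_iff.2 fun p q hpq => ?_
  have hs := congrArg (αv s) hpq
  have ht := congrArg (αv t) hpq
  simp only [map_add, map_smul, h.coroot_root, smul_eq_mul, map_zero] at hs ht
  constructor
  · refine (mul_eq_zero_iff_right hlt.ne').1 ?_
    linear_combination 2 * hs - αv s (α t) * ht
  · refine (mul_eq_zero_iff_right hlt.ne').1 ?_
    linear_combination 2 * ht - αv t (α s) * hs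

variable {E : Type*} [AddCommGroup E] [Module ℝ E] {φ : E →ₗ[ℝ] V} {a : B → E}

theorem isLiftable_reflection (ha : ∀ s, φ (a s) = α s)
    (h2 : ∀ s, (αv s ∘ₗ φ) (a s) = 2) : M.IsLiftable fun s => Module.reflection (h2 s) := by
  intro s t
  rcases eq_or_ne s t with rfl | hst
  · ext x
    simp [Module.involutive_reflection (h2 s) x]
  rcases eq_or_ne (M s t) 0 with hM | hM
  · rw [hM, pow_zero]
  have hφ (k : ℕ) (x : E) : φ (((Module.reflection (h2 s) * Module.reflection (h2 t)) ^ k) x)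
      = ρ ((cs.simple s * cs.simple t) ^ k) (φ x) := by
    induction k with
    | zero => simp
    | succ k ih =>
      simp only [pow_succ', LinearEquiv.mul_apply, map_mul, ← ih, h.simple_apply,
        Module.reflection_apply, map_sub, map_smul, ha, LinearMap.comp_apply, smul_eq_mul]
      module
  have hspan (k : ℕ) (x : E) : ((Module.reflection (h2 s) * Module.reflection (h2 t)) ^ k) x - x
      ∈ Submodule.span ℝ {a s, a t} := by
    have hs : a s ∈ Submodule.span ℝ {a s, a t} := Submodule.subset_span (by simp)
    have ht : a t ∈ Submodule.span ℝ {a s, a t} := Submodule.subset_span (by simp)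
    rw [Module.reflection_mul_reflection_pow_apply, add_assoc, add_sub_cancel_left]
    exact add_mem (Submodule.smul_mem _ _ (sub_mem (Submodule.smul_mem _ _ ht)
      (Submodule.smul_mem _ _ hs))) (Submodule.smul_mem _ _ (sub_mem (Submodule.smul_mem _ _ hs)
      (Submodule.smul_mem _ _ ht)))
  ext x
  obtain ⟨p, q, hpq⟩ := Submodule.mem_span_pair.1 (hspan (M s t) x)
  have hzero : p • α s + q • α t = 0 := by
    rw [← ha, ← ha, ← map_smul, ← map_smul, ← map_add, hpq, map_sub, hφ,
      cs.simple_mul_simple_pow, map_one, LinearEquiv.coe_one, id, sub_self]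
  obtain ⟨rfl, rfl⟩ := LinearIndependent.pair_iff.1 (h.linearIndependent_pair hst hM) p q hzero
  rw [zero_smul, zero_smul, add_zero] at hpq
  exact sub_eq_zero.1 hpq.symm

theorem exists_lift (ha : ∀ s, φ (a s) = α s) :
    ∃ r : W →* E ≃ₗ[ℝ] E, IsRealization cs a (fun s => αv s ∘ₗ φ) r := by
  have h2 s : (αv s ∘ₗ φ) (a s) = 2 := by simp [ha, h.coroot_root]
  refine ⟨cs.lift ⟨_, h.isLiftable_reflection ha h2⟩, h2, fun s x => ?_, fun hst => ?_⟩
  · rw [cs.lift_apply_simple, Module.reflection_apply]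
  · simpa only [LinearMap.comp_apply, ha] using h.isCartanPair hst

-- A linear relation between the roots, seen as a vector of the lifted realization on `B →₀ ℝ`, is
-- orthogonal to all simple roots there, hence zero.
theorem linearIndependent [Finite W] : LinearIndependent ℝ α := by
  obtain ⟨r, hr⟩ := h.exists_lift (φ := Finsupp.linearCombination ℝ α)
    (a := fun s => Finsupp.single s 1) (by simp)
  obtain ⟨Q, hQ⟩ := exists_isInvariantInner r
  refine linearIndependent_iff.2 fun c hc => ?_
  have hsingle s : Q (Finsupp.single s 1) c = 0 := by
    simpa [hc] using (hr.coroot_mul_inner_root hQ s c).symm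
  by_contra hne
  refine (hQ.pos hne).ne' ?_
  have : Q.flip c = 0 := Finsupp.lhom_ext' fun s => LinearMap.ext_ring (hsingle s)
  exact DFunLike.congr_fun this c

end IsRealization

end LinearIndependence

section LongestElement

open CoxeterSystem

variable {V B W : Type*} [AddCommGroup V] [Module ℝ V] [Group W] {M : CoxeterMatrix B}
  {cs : CoxeterSystem M W} {α : B → V} {αv : B → Module.Dual ℝ V} {ρ : W →* V ≃ₗ[ℝ] V} {s : B}
  {w w₀ : W} {x : V}

theorem linearCombination_mem_rootCone {c : B →₀ ℝ} (hc : 0 ≤ c) :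
    Finsupp.linearCombination ℝ α c ∈ rootCone α :=
  sum_mem fun t _ => PointedCone.smul_mem _ (hc t) (root_mem_rootCone t)

theorem exists_eq_smul_of_add_eq_root (hα : LinearIndependent ℝ α) {y : V}
    (hx : x ∈ rootCone α) (hy : y ∈ rootCone α) (hxy : x + y = α s) :
    ∃ d : ℝ, 0 ≤ d ∧ x = d • α s := by
  obtain ⟨c, hc, rfl⟩ := exists_linearCombination_of_mem_rootCone hx
  obtain ⟨d, hd, rfl⟩ := exists_linearCombination_of_mem_rootCone hy
  have hsum : c + d = Finsupp.single s 1 := hα (by simp [hxy])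
  have hcs : c = Finsupp.single s (c s) := by
    refine Finsupp.eq_single_iff.2 ⟨fun t ht => ?_, rfl⟩
    by_contra hts
    have hadd := DFunLike.congr_fun hsum t
    rw [Finsupp.add_apply, Finsupp.single_eq_of_ne (by simpa using hts)] at hadd
    exact Finsupp.mem_support_iff.1 ht (((add_eq_zero_iff_of_nonneg (hc t) (hd t)).1 hadd).1)
  exact ⟨c s, hc s, by rw [hcs]; simp⟩

theorem exists_map_root_eq_smul_root (hα : LinearIndependent ℝ α) {g : V →ₗ[ℝ] V}
    (hg : Function.Involutive g) (hcone : ∀ s, g (α s) ∈ rootCone α) (s : B) :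
    ∃ t, ∃ c : ℝ, 0 < c ∧ g (α s) = c • α t := by
  have hmap : rootCone α ≤ (rootCone α).comap g :=
    Submodule.span_le.2 (Set.range_subset_iff.2 hcone)
  have hne (t : B) : g (α t) ≠ 0 := fun h0 => hα.ne_zero t (hg.injective (h0.trans g.map_zero.symm))
  obtain ⟨c, hc, hcs⟩ := exists_linearCombination_of_mem_rootCone (hcone s)
  obtain ⟨t, ht⟩ : ∃ t, c t ≠ 0 := by
    by_contra! hzero
    obtain rfl : c = 0 := Finsupp.ext hzero
    exact hne s (by rw [← hcs, map_zero])
  have hct : 0 < c t := (hc t).lt_of_ne' ht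
  have hrest : Finsupp.linearCombination ℝ α (c.erase t) ∈ rootCone α :=
    linearCombination_mem_rootCone fun u => by
      classical
      rw [Finsupp.erase_apply]
      split_ifs
      exacts [le_rfl, hc u]
  have hsplit : c t • α t + Finsupp.linearCombination ℝ α (c.erase t) = g (α s) := by
    rw [← hcs, ← Finsupp.linearCombination_single, ← map_add, Finsupp.single_add_erase]
  obtain ⟨d, hd, hdt⟩ := exists_eq_smul_of_add_eq_root hα
    (PointedCone.smul_mem _ hct.le (hcone t)) (hmap hrest)
    (by rw [← map_smul]; exact (map_add g _ _).symm.trans (by rw [hsplit, hg (α s)]))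
  have hd0 : d ≠ 0 := by
    rintro rfl
    exact smul_ne_zero ht (hne t) (by rw [hdt, zero_smul])
  refine ⟨t, d⁻¹ * c t, by positivity, ?_⟩
  rw [mul_smul, eq_inv_smul_iff₀ hd0, ← map_smul, ← hdt, map_smul, hg (α t)]

/-- `w₀` has maximal length in the Coxeter group `W`. -/
def IsLongest (cs : CoxeterSystem M W) (w₀ : W) : Prop := ∀ w, cs.length w ≤ cs.length w₀

theorem IsLongest.isRightDescent (hw₀ : IsLongest cs w₀) (s : B) : cs.IsRightDescent w₀ s := by
  by_contra hs
  have := hw₀ (w₀ * cs.simple s)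
  have := cs.not_isRightDescent_iff.1 hs
  lia

theorem IsLongest.isLeftDescent (hw₀ : IsLongest cs w₀) (s : B) : cs.IsLeftDescent w₀ s := by
  by_contra hs
  have := hw₀ (cs.simple s * w₀)
  have := cs.not_isLeftDescent_iff.1 hs
  lia

namespace IsRealization

variable (h : IsRealization cs α αv ρ)
include h

theorem sub_map_mem_rootCone (hx : ∀ s, 0 ≤ αv s x) (w : W) : x - ρ w x ∈ rootCone α := by
  induction hN : cs.length w generalizing w with
  | zero => simp [cs.length_eq_zero_iff.1 hN]
  | succ N ih =>
    obtain ⟨s, hs⟩ := cs.exists_rightDescent_of_ne_one (w := w) fun h1 => by simp [h1] at hN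
    have hlen := cs.isRightDescent_iff.1 hs
    have hw : ρ w x = ρ (w * cs.simple s) (ρ (cs.simple s) x) := by
      rw [← LinearEquiv.mul_apply, ← map_mul, cs.simple_mul_simple_cancel_right]
    have hdecomp : x - ρ w x
        = x - ρ (w * cs.simple s) x + αv s x • ρ (w * cs.simple s) (α s) := by
      rw [hw, h.simple_apply, map_sub, map_smul]
      abel
    rw [hdecomp]
    exact add_mem (ih _ (by lia)) (PointedCone.smul_mem _ (hx s)
      (h.map_root_mem_rootCone (cs.isRightDescent_iff_not_isRightDescent_mul.1 hs)))

theorem inner_nonneg_of_mem_rootCone {Q : LinearMap.BilinForm ℝ V} (hQ : IsInvariantInner ρ Q)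
    (hx : ∀ s, 0 ≤ αv s x) {y : V} (hy : y ∈ rootCone α) : 0 ≤ Q y x := by
  obtain ⟨c, hc, rfl⟩ := exists_linearCombination_of_mem_rootCone hy
  have hroot s : 0 ≤ Q (α s) x := by
    have := mul_nonneg (hx s) (hQ.pos (h.root_ne_zero s)).le
    linarith [h.coroot_mul_inner_root hQ s x]
  simp only [Finsupp.linearCombination_apply, Finsupp.sum, map_sum, map_smul, LinearMap.sum_apply,
    LinearMap.smul_apply, smul_eq_mul]
  exact Finset.sum_nonneg fun s _ => mul_nonneg (hc s) (hroot s)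

variable [Finite W]

theorem mul_self_eq_one_of_isLongest (hw₀ : IsLongest cs w₀) : w₀ * w₀ = 1 := by
  by_contra hne
  obtain ⟨s, hs⟩ := cs.exists_rightDescent_of_ne_one hne
  have hcone : rootCone α ≤ (rootCone α).comap (-(ρ w₀ : V →ₗ[ℝ] V)) :=
    Submodule.span_le.2 (Set.range_subset_iff.2 fun t =>
      h.neg_map_root_mem_rootCone (hw₀.isRightDescent t))
  have hpos : ρ (w₀ * w₀) (α s) ∈ rootCone α := by
    simpa using hcone (hcone (root_mem_rootCone s))
  refine h.root_ne_zero s ((ρ (w₀ * w₀)).map_eq_zero_iff.1 ?_)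
  exact eq_zero_of_mem_rootCone_of_neg_mem h.linearIndependent hpos
    (h.neg_map_root_mem_rootCone hs)

theorem map_map_of_isLongest (hw₀ : IsLongest cs w₀) (x : V) : ρ w₀ (ρ w₀ x) = x := by
  rw [← LinearEquiv.mul_apply, ← map_mul, h.mul_self_eq_one_of_isLongest hw₀, map_one,
    LinearEquiv.coe_one, id]

theorem exists_opposite_root (hw₀ : IsLongest cs w₀) (s : B) :
    ∃ t, ∃ c : ℝ, 0 < c ∧ -ρ w₀ (α s) = c • α t ∧ ∀ x, αv t (-ρ w₀ x) = c * αv s x := by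
  obtain ⟨Q, hQ⟩ := exists_isInvariantInner ρ
  obtain ⟨t, c, hc, ht⟩ := exists_map_root_eq_smul_root h.linearIndependent
    (g := -(ρ w₀ : V →ₗ[ℝ] V)) (fun x => by simp [h.map_map_of_isLongest hw₀])
    (fun r => h.neg_map_root_mem_rootCone (hw₀.isRightDescent r)) s
  have ht' : -ρ w₀ (α s) = c • α t := ht
  refine ⟨t, c, hc, ht', fun x => ?_⟩
  have hs := h.coroot_mul_inner_root hQ s x
  rw [← hQ.map_map w₀ (α s) (α s), ← hQ.map_map w₀ (α s) x, ← neg_neg (ρ w₀ (α s)), ht'] at hs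
  have hxt := h.coroot_mul_inner_root hQ t (-ρ w₀ x)
  have hpos := hQ.pos (h.root_ne_zero t)
  simp only [map_neg, map_smul, LinearMap.neg_apply, LinearMap.smul_apply, smul_eq_mul]
    at hs hxt ⊢
  refine mul_left_cancel₀ (mul_pos hc hpos).ne' ?_
  linear_combination c * hxt - hs

theorem exists_pitman_neg_map_eq (hw₀ : IsLongest cs w₀) (s : B) :
    ∃ t, ∀ π : ℝ → V, pitman (α t) (αv t) (fun u => -ρ w₀ (π u))
      = fun u => -ρ w₀ (pitman (α s) (αv s) π u) := by
  obtain ⟨t, c, hc, hroot, hcoroot⟩ := h.exists_opposite_root hw₀ s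
  refine ⟨t, fun π => funext fun u => ?_⟩
  simp only [pitman_apply, hcoroot]
  rw [infIcc_const_mul hc.le, map_sub, map_smul, mul_comm, mul_smul, ← hroot]
  module

theorem map_eq_self_of_dominant (hx : ∀ s, 0 ≤ αv s x) (hwx : ∀ s, 0 ≤ αv s (ρ w x)) :
    ρ w x = x := by
  obtain ⟨Q, hQ⟩ := exists_isInvariantInner ρ
  have hnonneg := h.inner_nonneg_of_mem_rootCone hQ hwx (h.sub_map_mem_rootCone hx w)
  by_contra hne
  have hpos := hQ.pos (sub_ne_zero.2 (Ne.symm hne))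
  simp only [map_sub, LinearMap.sub_apply, hQ.map_map, hQ.isSymm.eq (ρ w x) x] at hnonneg hpos
  linarith

end IsRealization

end LongestElement

section SchuetzenbergerInvolution

open CoxeterSystem

variable {V B W : Type*} [AddCommGroup V] [Module ℝ V] [Group W] {M : CoxeterMatrix B}
  {cs : CoxeterSystem M W} {α : B → V} {αv : B → Module.Dual ℝ V} {ρ : W →* V ≃ₗ[ℝ] V} {s : B}
  {l l' : List B} {π π' : ℝ → V} {T : ℝ} {w₀ : W}

/-- The Pitman transform `P_{α_s}` as a self-map of the set of paths. -/
noncomputable def pitmanEnd (α : B → V) (αv : B → Module.Dual ℝ V) (s : B) :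
    Function.End {π // IsPath αv π} :=
  fun π => ⟨pitman (α s) (αv s) π, π.2.pitman s (α s)⟩

theorem coe_prod_map_pitmanEnd (l : List B) (π : {π // IsPath αv π}) :
    ((l.map (pitmanEnd α αv)).prod π : ℝ → V) = pitmanWord α αv l π := by
  induction l with
  | nil => rfl
  | cons s l ih =>
    rw [pitmanWord_cons, ← ih]
    rfl

theorem schuetz_eq_pitmanWord_dualPath (g : V → V) :
    schuetz T α αv l g π = pitmanWord α αv l (dualPath T g π) := rfl

theorem schuetz_eqOn (hT : 0 ≤ T) (g : V → V) (h : Set.EqOn π π' (Set.Icc 0 T)) :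
    Set.EqOn (schuetz T α αv l g π) (schuetz T α αv l g π') (Set.Icc 0 T) :=
  pitmanWord_eqOn l (dualPath_eqOn hT g h)

theorem exists_isPath_eqOn (hT : 0 ≤ T)
    (hcont : ∀ s, ContinuousOn (fun t => αv s (π t)) (Set.Icc 0 T)) (h0 : π 0 = 0) :
    ∃ π', IsPath αv π' ∧ Set.EqOn π π' (Set.Icc 0 T) := by
  refine ⟨fun t => π (Set.projIcc 0 T hT t), ⟨fun s => ?_, ?_⟩, fun t ht => ?_⟩
  · exact (hcont s).comp_continuous (continuous_subtype_val.comp continuous_projIcc)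
      fun t => (Set.projIcc 0 T hT t).2
  · rw [Set.projIcc_left, h0]
  · simp only [Set.projIcc_of_mem hT ht]

namespace IsRealization

variable (h : IsRealization cs α αv ρ)
include h

theorem satisfiesBraidRelations_pitmanEnd : SatisfiesBraidRelations M (pitmanEnd α αv) := by
  intro s t hst hM
  funext π
  refine Subtype.ext ?_
  rw [coe_prod_map_pitmanEnd, coe_prod_map_pitmanEnd]
  exact pitmanWord_braid hM (M.off_diagonal s t hst) hst (h.coroot_root s) (h.coroot_root t)
    (h.isCartanPair hst) π.2

theorem inner_pitman_apply {Q : LinearMap.BilinForm ℝ V} (hQ : IsInvariantInner ρ Q) (s : B)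
    (π : ℝ → V) (t : ℝ) : Q (pitman (α s) (αv s) π t) (pitman (α s) (αv s) π t) = Q (π t) (π t)
      + -infIcc (fun u => αv s (π u)) 0 t
        * (αv s (π t) - infIcc (fun u => αv s (π u)) 0 t) * Q (α s) (α s) := by
  have hcoroot := h.coroot_mul_inner_root hQ s (π t)
  have hsymm := hQ.isSymm.eq (π t) (α s)
  simp only [pitman_apply, map_sub, map_smul, LinearMap.sub_apply, LinearMap.smul_apply,
    smul_eq_mul, ← hsymm] at hcoroot ⊢
  linear_combination infIcc (fun u => αv s (π u)) 0 t * hcoroot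

theorem exists_pitman_eq_map_or_inner_lt {Q : LinearMap.BilinForm ℝ V}
    (hQ : IsInvariantInner ρ Q) (s : B) (hπ : IsPath αv π) {t : ℝ} (ht : 0 ≤ t) :
    (∃ w, pitman (α s) (αv s) π t = ρ w (π t)) ∨
      Q (π t) (π t) < Q (pitman (α s) (αv s) π t) (pitman (α s) (αv s) π t) := by
  have hcont := (hπ.continuous_coord s).continuousOn (s := Set.Icc 0 t)
  have h0 : infIcc (fun u => αv s (π u)) 0 t ≤ 0 :=
    (infIcc_le hcont ⟨le_rfl, ht⟩).trans_eq (hπ.coord_zero s)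
  have hle : infIcc (fun u => αv s (π u)) 0 t ≤ αv s (π t) := infIcc_le hcont ⟨ht, le_rfl⟩
  rcases h0.eq_or_lt with h0 | h0
  · exact .inl ⟨1, by simp [pitman_apply, h0]⟩
  rcases hle.eq_or_lt with hle | hle
  · exact .inl ⟨cs.simple s, by rw [pitman_apply, hle, h.simple_apply]⟩
  · refine .inr ?_
    rw [h.inner_pitman_apply hQ]
    have := mul_pos (mul_pos (neg_pos.2 h0) (sub_pos.2 hle)) (hQ.pos (h.root_ne_zero s))
    linarith

theorem exists_pitmanWord_eq_map_or_inner_lt {Q : LinearMap.BilinForm ℝ V}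
    (hQ : IsInvariantInner ρ Q) (l : List B) (hπ : IsPath αv π) {t : ℝ} (ht : 0 ≤ t) :
    (∃ w, pitmanWord α αv l π t = ρ w (π t)) ∨
      Q (π t) (π t) < Q (pitmanWord α αv l π t) (pitmanWord α αv l π t) := by
  induction l with
  | nil => exact .inl ⟨1, by simp [pitmanWord_nil]⟩
  | cons s l ih =>
    rw [pitmanWord_cons]
    rcases h.exists_pitman_eq_map_or_inner_lt hQ s (hπ.pitmanWord l) ht with ⟨v, hv⟩ | hlt <;>
      rcases ih with ⟨w, hw⟩ | hlt'
    · exact .inl ⟨v * w, by rw [hv, hw, map_mul, LinearEquiv.mul_apply]⟩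
    · exact .inr (by rwa [hv, hQ.map_map])
    · exact .inr (by rwa [hw, hQ.map_map] at hlt)
    · exact .inr (hlt'.trans hlt)

variable [Finite W]

theorem pitmanWord_eq_of_wordProd_eq (hl : cs.IsReduced l) (hl' : cs.IsReduced l')
    (heq : cs.wordProd l = cs.wordProd l') (hπ : IsPath αv π) :
    pitmanWord α αv l π = pitmanWord α αv l' π := by
  have hprod := h.prod_map_eq_of_wordProd_eq h.linearIndependent
    h.satisfiesBraidRelations_pitmanEnd hl hl' heq
  rw [← coe_prod_map_pitmanEnd l ⟨π, hπ⟩, hprod, coe_prod_map_pitmanEnd]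

theorem isPath_dualPath (hw₀ : IsLongest cs w₀) (hπ : IsPath αv π) :
    IsPath αv (dualPath T (ρ w₀) π) where
  continuous_coord s := by
    obtain ⟨t, c, hc, -, hcoroot⟩ := h.exists_opposite_root hw₀ s
    have hst x : αv s (-ρ w₀ x) = c⁻¹ * αv t x := by
      have hx := hcoroot (-ρ w₀ x)
      rw [map_neg (ρ w₀), h.map_map_of_isLongest hw₀, neg_neg] at hx
      rw [eq_inv_mul_iff_mul_eq₀ hc.ne', hx]
    simp only [dualPath, hst]
    exact continuous_const.mul ((hπ.reversedPath T).continuous_coord t)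
  apply_zero := by simp [dualPath, (hπ.reversedPath T).apply_zero]

theorem dualPath_dualPath (hw₀ : IsLongest cs w₀) (hπ : π 0 = 0) :
    dualPath T (ρ w₀) (dualPath T (ρ w₀) π) = π := by
  conv_rhs => rw [← reversedPath_reversedPath hπ (T := T)]
  funext t
  simp only [dualPath, reversedPath, map_sub, map_neg, h.map_map_of_isLongest hw₀]
  abel

theorem pitmanWord_pitman (hw₀ : IsLongest cs (cs.wordProd l)) (hl : cs.IsReduced l)
    (hπ : IsPath αv π) (s : B) :
    pitmanWord α αv l (pitman (α s) (αv s) π) = pitmanWord α αv l π := by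
  obtain ⟨k, hk, hkw⟩ := cs.exists_isReduced (cs.wordProd l * cs.simple s)
  have hprod : cs.wordProd l = cs.wordProd (k ++ [s]) := by
    rw [cs.wordProd_append, ← hkw, cs.wordProd_singleton, cs.simple_mul_simple_cancel_right]
  have hred : cs.IsReduced (k ++ [s]) := by
    have := cs.isRightDescent_iff.1 (hw₀.isRightDescent s)
    rw [CoxeterSystem.IsReduced, ← hprod, List.length_append, List.length_singleton, ← hk.eq,
      ← hkw, this]
  rw [h.pitmanWord_eq_of_wordProd_eq hl hred hprod (hπ.pitman s _),
    h.pitmanWord_eq_of_wordProd_eq hl hred hprod hπ, pitmanWord_append, pitmanWord_append]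
  exact congrArg _ (pitman_pitman (h.coroot_root s) hπ)

theorem map_pitmanWord_nonneg (hw₀ : IsLongest cs (cs.wordProd l)) (hl : cs.IsReduced l)
    (hπ : IsPath αv π) (s : B) {t : ℝ} (ht : 0 ≤ t) : 0 ≤ αv s (pitmanWord α αv l π t) := by
  obtain ⟨k, hk, hkw⟩ := cs.exists_isReduced (cs.simple s * cs.wordProd l)
  have hprod : cs.wordProd l = cs.wordProd (s :: k) := by
    rw [cs.wordProd_cons, ← hkw, cs.simple_mul_simple_cancel_left]
  have hred : cs.IsReduced (s :: k) := by
    have := cs.isLeftDescent_iff.1 (hw₀.isLeftDescent s)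
    rw [CoxeterSystem.IsReduced, ← hprod, List.length_cons, ← hk.eq, ← hkw, this]
  rw [h.pitmanWord_eq_of_wordProd_eq hl hred hprod hπ]
  exact map_pitman_nonneg (h.coroot_root s) (hπ.pitmanWord k) ht

theorem schuetz_pitman (hw₀ : IsLongest cs (cs.wordProd l)) (hl : cs.IsReduced l)
    (hπ : IsPath αv π) (s : B) :
    Set.EqOn (schuetz T α αv l (ρ (cs.wordProd l)) (pitman (α s) (αv s) π))
      (schuetz T α αv l (ρ (cs.wordProd l)) π) (Set.Icc 0 T) := by
  obtain ⟨t, ht⟩ := h.exists_pitman_neg_map_eq hw₀ s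
  rw [schuetz_eq_pitmanWord_dualPath, schuetz_eq_pitmanWord_dualPath,
    ← h.pitmanWord_pitman hw₀ hl (h.isPath_dualPath hw₀ hπ) t,
    ← h.pitmanWord_pitman hw₀ hl (h.isPath_dualPath hw₀ (hπ.pitman s (α s))) t]
  refine pitmanWord_eqOn l fun u hu => ?_
  change pitman _ _ (fun u => -ρ _ (reversedPath T _ u)) u
    = pitman _ _ (fun u => -ρ _ (reversedPath T _ u)) u
  simp only [ht, pitman_reversedPath_pitman (h.coroot_root s) hπ hu]

theorem schuetz_pitmanWord (hw₀ : IsLongest cs (cs.wordProd l)) (hl : cs.IsReduced l)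
    (hπ : IsPath αv π) (l' : List B) :
    Set.EqOn (schuetz T α αv l (ρ (cs.wordProd l)) (pitmanWord α αv l' π))
      (schuetz T α αv l (ρ (cs.wordProd l)) π) (Set.Icc 0 T) := by
  induction l' with
  | nil => exact fun _ _ => rfl
  | cons s l' ih => exact (h.schuetz_pitman hw₀ hl (hπ.pitmanWord l') s).trans ih

theorem schuetz_schuetz (hw₀ : IsLongest cs (cs.wordProd l)) (hl : cs.IsReduced l)
    (hπ : IsPath αv π) :
    Set.EqOn (schuetz T α αv l (ρ (cs.wordProd l)) (schuetz T α αv l (ρ (cs.wordProd l)) π))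
      (pitmanWord α αv l π) (Set.Icc 0 T) := by
  have hword := h.schuetz_pitmanWord (T := T) hw₀ hl (h.isPath_dualPath (T := T) hw₀ hπ) l
  rwa [schuetz_eq_pitmanWord_dualPath (π := dualPath _ _ _),
    h.dualPath_dualPath hw₀ hπ.apply_zero] at hword

theorem schuetz_apply_endpoint (hT : 0 ≤ T) (hw₀ : IsLongest cs (cs.wordProd l))
    (hl : cs.IsReduced l) (hπ : IsPath αv π) :
    schuetz T α αv l (ρ (cs.wordProd l)) π T = pitmanWord α αv l π T := by
  obtain ⟨Q, hQ⟩ := exists_isInvariantInner ρ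
  have hTmem : T ∈ Set.Icc 0 T := ⟨hT, le_rfl⟩
  have hdual {η : ℝ → V} (hη : IsPath αv η) :
      dualPath T (ρ (cs.wordProd l)) η T = ρ (cs.wordProd l) (η T) := by
    simp [dualPath, reversedPath, hη.apply_zero]
  have hstep {η : ℝ → V} (hη : IsPath αv η) := h.exists_pitmanWord_eq_map_or_inner_lt hQ l
    (h.isPath_dualPath (T := T) hw₀ hη) hT
  simp only [← schuetz_eq_pitmanWord_dualPath] at hstep
  have hP := hπ.pitmanWord (α := α) l
  have hI := (h.isPath_dualPath (T := T) hw₀ hπ).pitmanWord (α := α) l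
  have hIP := hstep hP
  have hII := hstep hI
  rw [hdual hP, h.schuetz_pitmanWord hw₀ hl hπ l hTmem, hQ.map_map] at hIP
  rw [hdual hI, ← schuetz_eq_pitmanWord_dualPath, h.schuetz_schuetz hw₀ hl hπ hTmem,
    hQ.map_map] at hII
  obtain ⟨w, hw⟩ : ∃ w, schuetz T α αv l (ρ (cs.wordProd l)) π T
      = ρ w (ρ (cs.wordProd l) (pitmanWord α αv l π T)) := by
    refine hIP.resolve_right fun hlt => ?_
    rcases hII with ⟨v, hv⟩ | hlt'
    · rw [hv, hQ.map_map, hQ.map_map] at hlt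
      exact hlt.false
    · exact hlt.asymm hlt'
  rw [← LinearEquiv.mul_apply, ← map_mul] at hw
  rw [hw]
  refine h.map_eq_self_of_dominant (fun s => h.map_pitmanWord_nonneg hw₀ hl hπ s hT) fun s => ?_
  rw [← hw]
  exact h.map_pitmanWord_nonneg hw₀ hl (h.isPath_dualPath hw₀ hπ) s hT

end IsRealization

theorem schuetz_involution_general (hT : 0 ≤ T) [Finite W] (h : IsRealization cs α αv ρ)
    (hw₀ : IsLongest cs w₀) (hl : cs.wordProd l = w₀) (hred : cs.IsReduced l)
    (hcont : ∀ s, ContinuousOn (fun t => αv s (π t)) (Set.Icc 0 T)) (h0 : π 0 = 0) :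
    Set.EqOn (schuetz T α αv l (ρ w₀) (schuetz T α αv l (ρ w₀) π)) (pitmanWord α αv l π)
        (Set.Icc 0 T) ∧
      (IsDominantPath αv T π →
        Set.EqOn (schuetz T α αv l (ρ w₀) (schuetz T α αv l (ρ w₀) π)) π (Set.Icc 0 T)) ∧
      Set.EqOn (schuetz T α αv l (ρ w₀) (pitmanWord α αv l π)) (schuetz T α αv l (ρ w₀) π)
        (Set.Icc 0 T) ∧
      schuetz T α αv l (ρ w₀) π T = pitmanWord α αv l π T ∧
      (IsDominantPath αv T π → schuetz T α αv l (ρ w₀) π T = π T) := by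
  subst hl
  obtain ⟨π', hπ', heq⟩ := exists_isPath_eqOn hT hcont h0
  have hTmem : T ∈ Set.Icc 0 T := ⟨hT, le_rfl⟩
  have hP := pitmanWord_eqOn (α := α) (αv := αv) l heq
  have hI {η η' : ℝ → V} := schuetz_eqOn (α := α) (αv := αv) (l := l) (π := η) (π' := η') hT
    (ρ (cs.wordProd l))
  have hinvol := ((hI (hI heq)).trans (h.schuetz_schuetz hw₀ hred hπ')).trans hP.symm
  have hendpoint := (hI heq hTmem).trans
    ((h.schuetz_apply_endpoint hT hw₀ hred hπ').trans (hP hTmem).symm)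
  have hdom (hd : IsDominantPath αv T π) : Set.EqOn (pitmanWord α αv l π) π (Set.Icc 0 T) :=
    (hP.trans (pitmanWord_eqOn_self hπ' (fun s t ht => heq ht ▸ hd s t ht) l)).trans heq.symm
  exact ⟨hinvol, fun hd => hinvol.trans (hdom hd),
    ((hI hP).trans (h.schuetz_pitmanWord hw₀ hred hπ' l)).trans (hI heq).symm,
    hendpoint, fun hd => hendpoint.trans (hdom hd hTmem)⟩

end SchuetzenbergerInvolution

/-- Theorem 4.6 of Biane–Bougerol–O'Connell, properties of the generalized
Schützenberger involution `I = P_{w₀} ∘ (−w₀) ∘ κ`: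
(i) `I ∘ I = P_{w₀}`; (ii) `I` restricted to dominant paths is an involution;
(iii) `I ∘ P_{w₀} = I`; (iv) `(Iπ)(T) = (P_{w₀} π)(T)` for every path `π`,
in particular `(Iπ)(T) = π(T)` for dominant `π`. -/
theorem schuetz_involution
    {V : Type*} [NormedAddCommGroup V] [NormedSpace ℝ V] [FiniteDimensional ℝ V]
    (T : ℝ) (hT : 0 < T)
    {B : Type*} [Fintype B] {W : Type*} [Group W] [Finite W]
    (M : CoxeterMatrix B) (cs : CoxeterSystem M W)
    (α : B → V) (αv : B → Module.Dual ℝ V)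
    (hpair : ∀ s, αv s (α s) = 2)
    (ρ : W →* (V ≃ₗ[ℝ] V)) (hρinj : Function.Injective ρ)
    (hρs : ∀ s v, ρ (cs.simple s) v = v - αv s v • α s)
    (hM : ∀ s s' : B, s ≠ s' →
      (M s s' = 2 ∧ αv s (α s') = 0 ∧ αv s' (α s) = 0) ∨
      (αv s (α s') < 0 ∧ αv s' (α s) < 0 ∧
        αv s (α s') * αv s' (α s) = 4 * Real.cos (Real.pi / (M s s' : ℝ)) ^ 2))
    (w₀ : W) (hw₀ : ∀ w : W, cs.length w ≤ cs.length w₀)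
    (l₀ : List B) (hl₀ : cs.wordProd l₀ = w₀) (hl₀red : cs.IsReduced l₀)
    (π : ℝ → V) (hcont : ContinuousOn π (Set.Icc 0 T)) (h0 : π 0 = 0) :
    -- (i) `I ∘ I = P_{w₀}`
    (∀ t ∈ Set.Icc 0 T,
      schuetz T α αv l₀ (fun v => ρ w₀ v) (schuetz T α αv l₀ (fun v => ρ w₀ v) π) t
        = pitmanWord α αv l₀ π t) ∧
    -- (ii) `I` is an involution on dominant paths
    ((∀ s : B, ∀ t ∈ Set.Icc 0 T, 0 ≤ αv s (π t)) →
      ∀ t ∈ Set.Icc 0 T,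
        schuetz T α αv l₀ (fun v => ρ w₀ v) (schuetz T α αv l₀ (fun v => ρ w₀ v) π) t
          = π t) ∧
    -- (iii) `I ∘ P_{w₀} = I`
    (∀ t ∈ Set.Icc 0 T,
      schuetz T α αv l₀ (fun v => ρ w₀ v) (pitmanWord α αv l₀ π) t
        = schuetz T α αv l₀ (fun v => ρ w₀ v) π t) ∧
    -- (iv) duality relation at the endpoint
    (schuetz T α αv l₀ (fun v => ρ w₀ v) π T = pitmanWord α αv l₀ π T) ∧
    ((∀ s : B, ∀ t ∈ Set.Icc 0 T, 0 ≤ αv s (π t)) →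
      schuetz T α αv l₀ (fun v => ρ w₀ v) π T = π T) := by
  exact schuetz_involution_general hT.le ⟨hpair, hρs, fun hst => hM _ _ hst⟩ hw₀ hl₀ hl₀red
    (fun s => (LinearMap.continuous_of_finiteDimensional (αv s)).comp_continuousOn hcont) h0
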